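/- arXiv:2602.19989 — 4 statements merged into one kernel-verified Lean document; each statement's English description precedes it below -/
import Mathlib

section
/- There exist an absolute constant c > 0 and a threshold p_0 such that for every prime p ≥ p_0, every subset A ⊆ ℤ_p \ {0} with |A| ≤ exp(c·(log p)^{1/4}) is sequenceable. -/
/-- A list `l` (an ordering of a finite set) is a *sequencing* if its partial sums
`p_i = l_1 + ⋯ + l_i` (for `1 ≤ i ≤ |l|`) are pairwise distinct, and moreover
`p_i ≠ 0` for every `1 ≤ i ≤ |l| - 1`. -/
def IsSequencing {G : Type*} [AddCommGroup G] (l : List G) : Prop :=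
  (∀ i j : ℕ, 1 ≤ i → i < j → j ≤ l.length → (l.take i).sum ≠ (l.take j).sum) ∧
  (∀ i : ℕ, 1 ≤ i → i ≤ l.length - 1 → (l.take i).sum ≠ 0)

/-- A finite subset `A` of an abelian group is *sequenceable* if some ordering of its
elements is a sequencing. -/
def Sequenceable {G : Type*} [AddCommGroup G] [DecidableEq G] (A : Finset G) : Prop :=
  ∃ l : List G, l.Nodup ∧ l.toFinset = A ∧ IsSequencing l

/-!
If a dilate of `A` consists of small residues, then sums in `ℤ/n` do not wrap around, and a
sequencing is provided by the grasshopper theorem over `ℤ`: the elements of a set of nonzero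
integers can be ordered so that no sum of a proper segment of the ordering vanishes.

In general, split off dissociated blocks of equal size until the rest `V` has small additive
dimension. By Dirichlet's theorem a dilation makes `V` small, and hence all its subset sums lie in a
set `H` of small residues. Let `Q` be a maximal subset of `A` that is dissociated modulo `H`. If `Q`
is small, a second dilation makes all of `A` small. If `Q` is large, let its two halves `Q₁` and
`Q₂` and the dissociated blocks contribute batches of many pairs. Put the first members of the pairs
first, in the order `Q₁`, dissociated blocks, `Q₂`, then the elements of `V` of either sign in two
groups separated by an element of `Q`, and then the second members of the pairs, again in the order
`Q₁`, dissociated blocks, `Q₂`. For a segment that separates all pairs of some batch, dissociativity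
makes the proportion of exchange patterns of the pairs that give it sum zero tiny, so that a union
bound leaves a pattern for which no such sum vanishes. A segment that separates no batch consists of
elements of `V` of one sign, or lies in a single block, or straddles two adjacent ones, or contains
besides elements of `V` only elements of `Q`, or has a complement inside `Q`, and its sum is nonzero
for every pattern.
-/

section Sequencing

variable {G ι : Type*} [AddCommGroup G]

theorem isSequencing_iff {l : List G} :
    IsSequencing l ↔ ∀ t, t <:+: l → t ≠ [] → t ≠ l → t.sum ≠ 0 := by
  constructor
  · rintro ⟨sums_ne, sums_ne_zero⟩ t ⟨s, r, rfl⟩ ht htl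
    have htpos := List.length_pos_iff.mpr ht
    rcases s with - | ⟨x, s⟩
    · have hr : 0 < r.length := List.length_pos_iff.mpr (by rintro rfl; simp at htl)
      simpa using sums_ne_zero t.length htpos (by simp; omega)
    · have := sums_ne (s.length + 1) (s.length + 1 + t.length) (by omega) (by omega)
        (by simp; omega)
      simpa [List.take_append, List.take_of_length_le, add_right_comm] using this
  · intro hl
    refine ⟨fun i j hi hij hj hsum ↦ ?_, fun i hi hil ↦ ?_⟩
    · have hsplit : l.take j = l.take i ++ (l.take j).drop i := by
        simpa [List.take_take, min_eq_left hij.le] using (List.take_append_drop i (l.take j)).symm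
      refine hl ((l.take j).drop i) ⟨l.take i, l.drop j, by simp [← hsplit]⟩ ?_ ?_ ?_
      · exact List.ne_nil_of_length_pos (by simp; omega)
      · exact fun h ↦ absurd (congrArg List.length h) (by simp; omega)
      · rwa [hsplit, List.sum_append, left_eq_add] at hsum
    · refine hl (l.take i) (List.take_prefix i l).isInfix ?_ ?_
      · exact List.ne_nil_of_length_pos (by simp; omega)
      · exact fun h ↦ absurd (congrArg List.length h) (by simp; omega)

variable [DecidableEq G]

theorem sequenceable_image_of_forall_infix [DecidableEq ι] {l : List ι} (hl : l.Nodup) {w : ι → G}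
    (hw : Set.InjOn w l.toFinset)
    (hsum : ∀ t, t <:+: l → t ≠ [] → t ≠ l → ∑ a ∈ t.toFinset, w a ≠ 0) :
    Sequenceable (l.toFinset.image w) := by
  refine ⟨l.map w, hl.map_on ?_, by ext; simp, isSequencing_iff.mpr fun t ht htnil htl ↦ ?_⟩
  · exact fun a ha b hb ↦ hw (by simpa using ha) (by simpa using hb)
  · obtain ⟨r, hr, rfl⟩ := List.infix_map_iff.mp ht
    rw [← List.sum_toFinset w (hl.sublist hr.sublist)]
    exact hsum r hr (by rintro rfl; simp at htnil) (by rintro rfl; simp at htl)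

theorem Sequenceable.image [AddCommGroup ι] [DecidableEq ι] {S : Finset ι} (hS : Sequenceable S)
    {f : ι → G} (hf : Set.InjOn f S)
    (hsum : ∀ T ⊆ S, ∑ a ∈ T, f a = 0 → ∑ a ∈ T, a = 0) : Sequenceable (S.image f) := by
  obtain ⟨l, hl, rfl, hseq⟩ := hS
  refine sequenceable_image_of_forall_infix hl hf fun t ht htnil htl hzero ↦
    isSequencing_iff.mp hseq t ht htnil htl ?_
  have := hsum t.toFinset (fun a ↦ by simpa using fun h ↦ ht.mem h) hzero
  rwa [List.sum_toFinset _ (hl.sublist ht.sublist), List.map_id'] at this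

theorem Sequenceable.of_image_neg {S : Finset G} (h : Sequenceable (S.image Neg.neg)) :
    Sequenceable S := by
  have := h.image (f := Neg.neg) neg_injective.injOn fun T _ hT ↦ by
    rwa [Finset.sum_neg_distrib, neg_eq_zero] at hT
  simpa [Finset.image_image] using this

theorem sequenceable_empty : Sequenceable (∅ : Finset G) :=
  ⟨[], by simp, by simp, by simp [isSequencing_iff]⟩

end Sequencing

section Grasshopper

/-- `l` lists every element of the finite set `A` exactly once. -/
def IsOrdering {α : Type*} [DecidableEq α] (l : List α) (A : Finset α) : Prop :=
  l.Nodup ∧ l.toFinset = A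

namespace IsOrdering

variable {α : Type*} [DecidableEq α] {l : List α} {A : Finset α} {a : α}

theorem toList (A : Finset α) : IsOrdering A.toList A := ⟨A.nodup_toList, A.toList_toFinset⟩

theorem mem_iff (h : IsOrdering l A) : a ∈ l ↔ a ∈ A := by rw [← h.2, List.mem_toFinset]

theorem length_eq (h : IsOrdering l A) : l.length = A.card := by
  rw [← h.2, List.toFinset_card_of_nodup h.1]

theorem sum_eq [AddCommMonoid α] (h : IsOrdering l A) : l.sum = ∑ a ∈ A, a := by
  rw [← h.2, List.sum_toFinset _ h.1, List.map_id']

theorem cons (h : IsOrdering l (A.erase a)) (ha : a ∈ A) : IsOrdering (a :: l) A := by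
  refine ⟨List.nodup_cons.mpr ⟨by simp [h.mem_iff], h.1⟩, ?_⟩
  rw [List.toFinset_cons, h.2, Finset.insert_erase ha]

theorem perm {l' : List α} (h : IsOrdering l A) (hl : l'.Perm l) : IsOrdering l' A :=
  ⟨hl.nodup_iff.mpr h.1, (List.toFinset_eq_of_perm _ _ hl).trans h.2⟩

end IsOrdering

variable {G : Type*} [AddCommGroup G]

/-- Starting at `x` and jumping successively by the elements of `l`, one never lands in the set
`M` of mines. The starting point itself is allowed to be a mine. -/
def AvoidsFrom (x : G) (M : Finset G) (l : List G) : Prop :=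
  ∀ q, q <+: l → q ≠ [] → x + q.sum ∉ M

theorem avoidsFrom_nil (x : G) (M : Finset G) : AvoidsFrom x M [] := by
  simp [AvoidsFrom]

theorem avoidsFrom_cons {x a : G} {M : Finset G} {l : List G} :
    AvoidsFrom x M (a :: l) ↔ x + a ∉ M ∧ AvoidsFrom (x + a) M l := by
  constructor
  · exact fun h ↦ ⟨by simpa using h [a] (by simp) (by simp),
      fun q hq _ ↦ by simpa [add_assoc] using h (a :: q) (by simpa using hq) (by simp)⟩
  · rintro ⟨ha, hl⟩ q hq hqnil
    obtain rfl | ⟨r, rfl, hr⟩ := List.prefix_cons_iff.mp hq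
    · contradiction
    rcases eq_or_ne r [] with rfl | hrnil
    · simpa using ha
    · simpa [add_assoc] using hl r hr hrnil

theorem avoidsFrom_append {x : G} {M : Finset G} {l₁ l₂ : List G} :
    AvoidsFrom x M (l₁ ++ l₂) ↔ AvoidsFrom x M l₁ ∧ AvoidsFrom (x + l₁.sum) M l₂ := by
  induction l₁ generalizing x with
  | nil => simp [avoidsFrom_nil]
  | cons a l₁ ih => simp [avoidsFrom_cons, ih, and_assoc, add_assoc]

variable [LinearOrder G] [IsOrderedAddMonoid G] {x d : G} {S M : Finset G} {l : List G}

theorem AvoidsFrom.of_erase (h : AvoidsFrom x (M.erase d) l) (hd : d ≤ x)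
    (hl : ∀ a ∈ l, 0 < a) : AvoidsFrom x M l := by
  intro q hq hqnil hmem
  have hqpos : 0 < q.sum := List.sum_pos q (fun a ha ↦ hl a (hq.mem ha)) hqnil
  exact h q hq hqnil (Finset.mem_erase.mpr ⟨by grind, hmem⟩)

theorem avoidsFrom_of_add_sum_lt (hM : ∀ m ∈ M, d ≤ m) (hl : ∀ a ∈ l, 0 < a)
    (hd : x + l.sum < d) : AvoidsFrom x M l := by
  rintro q ⟨r, rfl⟩ - hmem
  have hr : 0 ≤ r.sum := List.sum_nonneg fun a ha ↦ (hl a (by simp [ha])).le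
  have := hM _ hmem
  rw [List.sum_append] at hd
  grind

/-- The property of `S` asserted by the grasshopper theorem: from any start, one can jump by each
element of `S` once while avoiding any fewer than `#S` mines that do not include the endpoint. -/
def IsTraversable (S : Finset G) : Prop :=
  ∀ x : G, ∀ M : Finset G, M.card < S.card → x + ∑ a ∈ S, a ∉ M →
    ∃ l, IsOrdering l S ∧ AvoidsFrom x M l

variable {a : G}

theorem exists_avoidsFrom_of_notMem (hS : IsTraversable (S.erase a)) (hpos : ∀ b ∈ S, 0 < b)
    (ha : a ∈ S) (hcard : M.card < S.card) (hend : x + ∑ b ∈ S, b ∉ M) (haM : x + a ∉ M)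
    (hd : d ∈ M) (hda : d < x + a) : ∃ l, IsOrdering l S ∧ AvoidsFrom x M l := by
  have hend' : x + a + ∑ b ∈ S.erase a, b ∉ M.erase d := by
    rw [add_assoc, Finset.add_sum_erase S (fun b ↦ b) ha]
    exact fun h ↦ hend (Finset.mem_of_mem_erase h)
  obtain ⟨l, hl, hav⟩ := hS (x + a) (M.erase d)
    (by rw [Finset.card_erase_of_mem hd, Finset.card_erase_of_mem ha]; grind) hend'
  refine ⟨a :: l, hl.cons ha, avoidsFrom_cons.mpr ⟨haM, hav.of_erase hda.le fun b hb ↦ ?_⟩⟩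
  exact hpos b (Finset.mem_of_mem_erase (hl.mem_iff.mp hb))

/-- The pairs `x + b`, `x + b + a` lie on opposite sides of the mine `x + a`, so they are too
many for the remaining mines to hit all of them. -/
theorem exists_add_notMem_and_add_add_notMem (hpos : ∀ b ∈ S, 0 < b) (ha : a ∈ S)
    (hmax : ∀ b ∈ S, b ≤ a) (hcard : M.card < S.card) (haM : x + a ∈ M) :
    ∃ b ∈ S.erase a, x + b ∉ M ∧ x + b + a ∉ M := by
  by_contra! hbad
  let f : G → G := fun b ↦ if x + b ∈ M then x + b else x + b + a
  have hf : ∀ b ∈ S.erase a, f b ∈ M.erase (x + a) := by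
    intro b hb
    have := hbad b hb
    have := hpos b (Finset.mem_of_mem_erase hb)
    grind
  have hinj : Set.InjOn f (S.erase a) := by
    intro b hb c hc hbc
    have hb' := Finset.mem_coe.mp hb
    have hc' := Finset.mem_coe.mp hc
    have := hpos b (Finset.mem_of_mem_erase hb')
    have := hpos c (Finset.mem_of_mem_erase hc')
    have := hmax b (Finset.mem_of_mem_erase hb')
    have := hmax c (Finset.mem_of_mem_erase hc')
    grind
  have := Finset.card_le_card_of_injOn f hf hinj
  rw [Finset.card_erase_of_mem ha, Finset.card_erase_of_mem haM] at this
  have := Finset.card_pos.mpr ⟨_, haM⟩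
  omega

theorem exists_avoidsFrom_of_mem
    (hS : ∀ b ∈ S.erase a, IsTraversable ((S.erase b).erase a)) (hpos : ∀ b ∈ S, 0 < b)
    (ha : a ∈ S) (hmax : ∀ b ∈ S, b ≤ a) (hcard : M.card < S.card) (hend : x + ∑ b ∈ S, b ∉ M)
    (haM : x + a ∈ M) (hd : d ∈ M) (hda : d < x + a) :
    ∃ l, IsOrdering l S ∧ AvoidsFrom x M l := by
  obtain ⟨b, hb, hbM, hbaM⟩ := exists_add_notMem_and_add_add_notMem hpos ha hmax hcard haM
  obtain ⟨hba, hbS⟩ := Finset.mem_erase.mp hb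
  have hab : a ∈ S.erase b := Finset.mem_erase.mpr ⟨hba.symm, ha⟩
  have hdM : d ∈ M.erase (x + a) := Finset.mem_erase.mpr ⟨hda.ne, hd⟩
  have hend' : x + b + a + ∑ c ∈ (S.erase b).erase a, c ∉ (M.erase (x + a)).erase d := by
    rw [add_assoc, Finset.add_sum_erase _ (fun c ↦ c) hab, add_assoc,
      Finset.add_sum_erase _ (fun c ↦ c) hbS]
    exact fun h ↦ hend (Finset.mem_of_mem_erase (Finset.mem_of_mem_erase h))
  have hcard' : ((M.erase (x + a)).erase d).card < ((S.erase b).erase a).card := by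
    have := Finset.card_pos.mpr ⟨_, hdM⟩
    rw [Finset.card_erase_of_mem haM] at this
    rw [Finset.card_erase_of_mem hdM, Finset.card_erase_of_mem haM, Finset.card_erase_of_mem hab,
      Finset.card_erase_of_mem hbS]
    omega
  obtain ⟨l, hl, hav⟩ := hS b hb (x + b + a) _ hcard' hend'
  have hlpos : ∀ c ∈ l, 0 < c := fun c hc ↦
    hpos c (Finset.mem_of_mem_erase (Finset.mem_of_mem_erase (hl.mem_iff.mp hc)))
  have := hpos b hbS
  refine ⟨b :: a :: l, (hl.cons hab).cons hbS, ?_⟩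
  exact avoidsFrom_cons.mpr ⟨hbM, avoidsFrom_cons.mpr ⟨hbaM,
    (hav.of_erase (by grind) hlpos).of_erase (by grind) hlpos⟩⟩

/-- If the walk `a :: (q ++ c :: r)` hits the first mine `d` after `q`, postponing the longest jump
`a` until after `c` keeps the walk below `d` up to `c`, and the rest of the walk is unchanged. -/
theorem AvoidsFrom.postpone {c : G} {q r : List G}
    (hav : AvoidsFrom (x + a) (M.erase d) (q ++ c :: r)) (hq : x + a + q.sum = d) (hca : c < a)
    (hpos : ∀ b ∈ q ++ c :: r, 0 < b) (hle : ∀ m ∈ M, d ≤ m) :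
    AvoidsFrom x M (q ++ [c] ++ a :: r) := by
  refine avoidsFrom_append.mpr ⟨?_, ?_⟩
  · refine avoidsFrom_of_add_sum_lt hle (fun b hb ↦ hpos b (by grind)) ?_
    rw [List.sum_append, List.sum_singleton]
    grind
  · have hafter := (avoidsFrom_append.mp hav).2
    rw [hq] at hafter
    replace hafter := hafter.of_erase le_rfl fun b hb ↦ hpos b (by simp_all)
    have hpoint : x + (q ++ [c]).sum + a = d + c := by
      rw [List.sum_append, List.sum_singleton, ← hq]
      abel
    rw [avoidsFrom_cons] at hafter ⊢
    rwa [hpoint]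

theorem exists_avoidsFrom_of_forall_le (hS : IsTraversable (S.erase a)) (hpos : ∀ b ∈ S, 0 < b)
    (ha : a ∈ S) (hmax : ∀ b ∈ S, b ≤ a) (hcard : M.card < S.card) (hend : x + ∑ b ∈ S, b ∉ M)
    (hd : d ∈ M) (hle : ∀ m ∈ M, d ≤ m) (hda : x + a ≤ d) :
    ∃ l, IsOrdering l S ∧ AvoidsFrom x M l := by
  have hsum : x + a + ∑ b ∈ S.erase a, b = x + ∑ b ∈ S, b := by
    rw [add_assoc, Finset.add_sum_erase S (fun b ↦ b) ha]
  obtain ⟨l, hl, hav⟩ := hS (x + a) (M.erase d)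
    (by rw [Finset.card_erase_of_mem hd, Finset.card_erase_of_mem ha]; grind)
    (by rw [hsum]; exact fun h ↦ hend (Finset.mem_of_mem_erase h))
  have hlS : ∀ b ∈ l, b ≠ a ∧ b ∈ S := fun b hb ↦ Finset.mem_erase.mp (hl.mem_iff.mp hb)
  by_cases hhit : ∃ q, q <+: l ∧ x + a + q.sum = d
  · obtain ⟨q, ⟨r, rfl⟩, hq⟩ := hhit
    obtain - | ⟨c, r⟩ := r
    · rw [List.append_nil] at hl
      rw [hl.sum_eq, hsum] at hq
      exact absurd (hq ▸ hd) hend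
    have hca : c < a := (hmax c (hlS c (by simp)).2).lt_of_ne (hlS c (by simp)).1
    have hperm : (q ++ [c] ++ a :: r).Perm (a :: (q ++ c :: r)) := by
      simpa using (List.perm_middle (l₁ := q ++ [c]) (a := a) (l₂ := r))
    exact ⟨_, (hl.cons ha).perm hperm,
      hav.postpone hq hca (fun b hb ↦ hpos b (hlS b hb).2) hle⟩
  · push Not at hhit
    have had : x + a ≠ d := by simpa using hhit [] List.nil_prefix
    refine ⟨a :: l, hl.cons ha, avoidsFrom_cons.mpr ⟨fun h ↦ ?_, fun q hq hqnil hmem ↦ ?_⟩⟩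
    · exact had (hda.antisymm (hle _ h))
    · exact hav q hq hqnil (Finset.mem_erase.mpr ⟨hhit q hq, hmem⟩)

/-- The grasshopper problem (International Mathematical Olympiad 2009, Problem 6). -/
theorem isTraversable_of_pos (hpos : ∀ b ∈ S, 0 < b) : IsTraversable S := by
  induction S using Finset.strongInduction with
  | _ S ih =>
  intro x M hcard hend
  obtain rfl | hM := M.eq_empty_or_nonempty
  · exact ⟨S.toList, .toList S, by simp [AvoidsFrom]⟩
  have hS : S.Nonempty := Finset.card_pos.mp (by omega)
  have ha := S.max'_mem hS
  have hmax : ∀ b ∈ S, b ≤ S.max' hS := S.le_max'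
  set a := S.max' hS
  have htrav : ∀ T ⊂ S, IsTraversable T := fun T hT ↦ ih T hT fun b hb ↦ hpos b (hT.1 hb)
  by_cases hlt : ∃ d ∈ M, d < x + a
  · obtain ⟨d, hd, hda⟩ := hlt
    by_cases haM : x + a ∈ M
    · exact exists_avoidsFrom_of_mem
        (fun b hb ↦ htrav _ ((Finset.erase_subset _ _).trans_ssubset
          (Finset.erase_ssubset (Finset.mem_of_mem_erase hb))))
        hpos ha hmax hcard hend haM hd hda
    · exact exists_avoidsFrom_of_notMem (htrav _ (Finset.erase_ssubset ha)) hpos ha hcard hend haM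
        hd hda
  · push Not at hlt
    exact exists_avoidsFrom_of_forall_le (htrav _ (Finset.erase_ssubset ha)) hpos ha hmax hcard hend
      (M.min'_mem hM) M.min'_le (hlt _ (M.min'_mem hM))

theorem exists_isOrdering_prefix_sum_ne (hpos : ∀ b ∈ S, 0 < b) (hd : ∑ b ∈ S, b ≠ d) :
    ∃ l, IsOrdering l S ∧ ∀ q, q <+: l → q ≠ [] → q ≠ l → q.sum ≠ d := by
  rcases lt_or_ge 1 S.card with hS | hS
  · obtain ⟨l, hl, hav⟩ := isTraversable_of_pos hpos 0 {d} (by simpa using hS) (by simpa using hd)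
    exact ⟨l, hl, fun q hq hqnil _ ↦ by simpa using hav q hq hqnil⟩
  · refine ⟨S.toList, .toList S, fun q hq hqnil hqS ↦ absurd (hq.eq_of_length_le ?_) hqS⟩
    rw [Finset.length_toList]
    exact hS.trans (List.length_pos_iff.mpr hqnil)

theorem infix_append_cases {α : Type*} {t l₁ l₂ : List α} (h : t <:+: l₁ ++ l₂) :
    t <:+: l₁ ∨ t <:+: l₂ ∨ ∃ s q, t = s ++ q ∧ s <:+ l₁ ∧ q <+: l₂ ∧ s ≠ [] ∧ q ≠ [] := by
  obtain ⟨u, v, huv⟩ := h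
  obtain ⟨w, hw, -⟩ | ⟨w, hw, hv⟩ := List.append_eq_append_iff.mp huv
  · exact .inl ⟨u, w, hw.symm⟩
  obtain ⟨r, hr, ht⟩ | ⟨r, hr, -⟩ := List.append_eq_append_iff.mp hw
  · rcases eq_or_ne r [] with rfl | hrnil
    · exact .inr (.inl ⟨[], v, by simp_all⟩)
    rcases eq_or_ne w [] with rfl | hwnil
    · exact .inl ⟨u, [], by simp_all⟩
    exact .inr (.inr ⟨r, w, ht, ⟨u, hr.symm⟩, ⟨v, hv.symm⟩, hrnil, hwnil⟩)
  · exact .inr (.inl ⟨r, v, by simp_all⟩)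

/-- The mines for the ordering of `P` are the suffix sums of `lN` below `∑ a ∈ P, a`. -/
theorem exists_isOrdering_prefix_sum_ne_suffix_sum {P : Finset G} (hP : ∀ a ∈ P, 0 < a)
    (hPne : P.Nonempty) {lN : List G}
    (hcard : lN.length < P.card ∨ lN.length = P.card ∧ ∑ a ∈ P, a ≤ lN.sum) :
    ∃ lP, IsOrdering lP P ∧ ∀ s q, s <:+ lN → q <+: lP → s ≠ [] → q ≠ [] → q ≠ lP →
      s.sum ≠ q.sum := by
  let I := (Finset.range lN.length).filter fun i ↦ (lN.drop i).sum < ∑ a ∈ P, a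
  have hI : I.card < P.card := by
    rcases hcard with hlt | ⟨heq, hle⟩
    · exact (Finset.card_filter_le _ _).trans_lt (by simpa using hlt)
    · rw [← heq, ← Finset.card_range lN.length]
      refine Finset.card_lt_card (Finset.filter_ssubset.mpr ⟨0, ?_, ?_⟩)
      · simpa [heq] using hPne.card_pos
      · simpa using hle
  obtain ⟨lP, hlP, hav⟩ := isTraversable_of_pos hP 0 (I.image fun i ↦ (lN.drop i).sum)
    (Finset.card_image_le.trans_lt hI) (by simp +contextual [I, ne_of_lt])
  refine ⟨lP, hlP, fun s q hs hq hsnil hqnil hqlP hsq ↦ ?_⟩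
  obtain ⟨u, rfl⟩ := hs
  have hlt : q.sum < ∑ a ∈ P, a := by
    obtain ⟨v, rfl⟩ := hq
    rw [← hlP.sum_eq, List.sum_append]
    exact lt_add_of_pos_right _ <|
      List.sum_pos v (fun a ha ↦ hP a (hlP.mem_iff.mp (by simp [ha]))) (by simpa using hqlP)
  refine hav q hq hqnil (Finset.mem_image.mpr ⟨u.length, ?_, ?_⟩)
  · simp [I, hsq, hlt, List.length_pos_iff.mpr hsnil]
  · rw [List.drop_left, zero_add, hsq]

theorem exists_orderings_suffix_sum_ne_prefix_sum {P N : Finset G} (hP : ∀ a ∈ P, 0 < a)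
    (hN : ∀ a ∈ N, 0 < a)
    (hcard : N.card < P.card ∨ N.card = P.card ∧ ∑ a ∈ P, a ≤ ∑ a ∈ N, a) :
    ∃ lN lP, IsOrdering lN N ∧ IsOrdering lP P ∧ ∀ s q, s <:+ lN → q <+: lP → s ≠ [] → q ≠ [] →
      s.sum = q.sum → s = lN ∧ q = lP := by
  obtain rfl | hPne := P.eq_empty_or_nonempty
  · obtain rfl : N = ∅ := Finset.card_eq_zero.mp (by grind)
    exact ⟨[], [], by simp [IsOrdering], by simp [IsOrdering], by simp⟩
  have hPpos := Finset.sum_pos hP hPne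
  obtain ⟨lN, hlN, hlN_ne⟩ := exists_isOrdering_prefix_sum_ne (d := ∑ a ∈ N, a - ∑ a ∈ P, a) hN
    (by grind)
  obtain ⟨lP, hlP, hlP_ne⟩ := exists_isOrdering_prefix_sum_ne_suffix_sum hP hPne (lN := lN)
    (by rwa [hlN.length_eq, hlN.sum_eq])
  refine ⟨lN, lP, hlN, hlP, fun s q hs hq hsnil hqnil hsq ↦ ?_⟩
  obtain rfl : q = lP := by
    by_contra hqlP
    exact hlP_ne s q hs hq hsnil hqnil hqlP hsq
  obtain ⟨u, rfl⟩ := hs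
  obtain rfl : u = [] := by
    by_contra hunil
    refine hlN_ne u (List.prefix_append u s) hunil (by simpa using hsnil) ?_
    rw [← hlN.sum_eq, ← hlP.sum_eq, List.sum_append, hsq, add_sub_cancel_right]
  simp

theorem sequenceable_neg_union {P N : Finset G} (hP : ∀ a ∈ P, 0 < a) (hN : ∀ a ∈ N, 0 < a)
    (hcard : N.card < P.card ∨ N.card = P.card ∧ ∑ a ∈ P, a ≤ ∑ a ∈ N, a) :
    Sequenceable (N.image Neg.neg ∪ P) := by
  obtain ⟨lN, lP, hlN, hlP, hcross⟩ := exists_orderings_suffix_sum_ne_prefix_sum hP hN hcard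
  have hdisj : ∀ a ∈ lN, ∀ b ∈ lP, -a ≠ b := fun a ha b hb hab ↦
    (neg_lt_zero.mpr (hN a (hlN.mem_iff.mp ha))).not_gt (hab ▸ hP b (hlP.mem_iff.mp hb))
  refine ⟨lN.map Neg.neg ++ lP, ?_, ?_, isSequencing_iff.mpr fun t ht htnil htne ↦ ?_⟩
  · refine (hlN.1.map neg_injective).append hlP.1 fun b hbN hbP ↦ ?_
    obtain ⟨a, ha, rfl⟩ := List.mem_map.mp hbN
    exact hdisj a ha _ hbP rfl
  · rw [List.toFinset_append, ← hlN.2, ← hlP.2]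
    ext
    simp
  obtain ht | ht | ⟨s, q, rfl, hs, hq, hsnil, hqnil⟩ := infix_append_cases ht
  · obtain ⟨r, hr, rfl⟩ := List.infix_map_iff.mp ht
    rw [← List.sum_neg, neg_ne_zero]
    exact (List.sum_pos r (fun a ha ↦ hN a (hlN.mem_iff.mp (hr.mem ha))) (by simpa using htnil)).ne'
  · exact (List.sum_pos t (fun a ha ↦ hP a (hlP.mem_iff.mp (ht.mem ha))) htnil).ne'
  · obtain ⟨r, hr, rfl⟩ := List.suffix_map_iff.mp hs
    rw [List.sum_append, ← List.sum_neg]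
    intro hzero
    obtain ⟨rfl, rfl⟩ := hcross r q hr hq (by simpa using hsnil) hqnil (neg_add_eq_zero.mp hzero)
    exact htne rfl

theorem sequenceable_of_zero_notMem (h0 : 0 ∉ S) : Sequenceable S := by
  let P := S.filter (0 < ·)
  let N := (S.filter (· < 0)).image Neg.neg
  have hP : ∀ a ∈ P, 0 < a := by simp [P]
  have hN : ∀ a ∈ N, 0 < a := by
    simpa only [N, Finset.forall_mem_image, neg_pos] using fun a ha ↦ (Finset.mem_filter.mp ha).2
  have hunion : S = N.image Neg.neg ∪ P := by
    ext a
    have := lt_trichotomy a 0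
    simp only [N, P, Finset.image_image, Finset.mem_union, Finset.mem_image, Finset.mem_filter]
    grind
  have hunion_neg : S.image Neg.neg = P.image Neg.neg ∪ N := by
    rw [hunion, Finset.image_union, Finset.image_image, Finset.union_comm]
    simp
  by_cases hcard : N.card < P.card ∨ N.card = P.card ∧ ∑ a ∈ P, a ≤ ∑ a ∈ N, a
  · exact hunion ▸ sequenceable_neg_union hP hN hcard
  · exact .of_image_neg (hunion_neg ▸ sequenceable_neg_union hN hP (by grind))

end Grasshopper

section Dissociation

open Finset

variable {G : Type*} [AddCommGroup G] {H : Set G} {s t D U Z : Finset G}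

/-- Distinct subsets of `s` have sums whose difference lies outside `H`. For `H = {0}` this is
Mathlib's `AddDissociated`; in the application `H` is a Bohr set and not a subgroup. -/
def AddDissociatedMod (H : Set G) (s : Finset G) : Prop :=
  ∀ t ⊆ s, ∀ u ⊆ s, ∑ a ∈ t, a - ∑ a ∈ u, a ∈ H → t = u

theorem AddDissociatedMod.subset (hts : t ⊆ s) (hs : AddDissociatedMod H s) :
    AddDissociatedMod H t :=
  fun x hx y hy ↦ hs x (hx.trans hts) y (hy.trans hts)

theorem addDissociatedMod_zero : AddDissociatedMod {0} s ↔ AddDissociated (s : Set G) := by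
  simp [AddDissociatedMod, AddDissociated, Set.InjOn, sub_eq_zero]

theorem AddDissociatedMod.addDissociated (h0 : 0 ∈ H) (hs : AddDissociatedMod H s) :
    AddDissociated (s : Set G) :=
  addDissociatedMod_zero.mp fun t ht u hu h ↦ hs t ht u hu <| by simp_all

theorem exists_decomposition {R : ℕ} (hR : 0 < R) (A : Finset G) :
    ∃ (n : ℕ) (block : G → ℕ), (∀ a ∈ A, block a ≤ n) ∧
      (∀ j, 1 ≤ j → j ≤ n → #{a ∈ A | block a = j} = R ∧
        AddDissociated (SetLike.coe {a ∈ A | block a = j})) ∧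
      ∀ T ⊆ {a ∈ A | block a = 0}, AddDissociated (T : Set G) → #T < R := by
  classical
  induction A using Finset.strongInduction with
  | _ A ih =>
  by_cases hT : ∃ T ⊆ A, #T = R ∧ AddDissociated (T : Set G)
  · obtain ⟨T, hTA, hTR, hTdiss⟩ := hT
    have hTne : T.Nonempty := card_pos.mp (hTR ▸ hR)
    obtain ⟨n, block, hle, hblock, hrest⟩ := ih (A \ T) (sdiff_ssubset hTA hTne)
    have hfilter : ∀ j ≤ n, {a ∈ A | (if a ∈ T then n + 1 else block a) = j} =
        {a ∈ A \ T | block a = j} := by grind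
    refine ⟨n + 1, fun a ↦ if a ∈ T then n + 1 else block a, ?_, fun j hj hjn ↦ ?_, ?_⟩
    · grind
    · obtain hjn | rfl := Nat.le_succ_iff.mp hjn
      · rw [hfilter j hjn]
        exact hblock j hj hjn
      · have : {a ∈ A | (if a ∈ T then n + 1 else block a) = n + 1} = T := by grind
        rw [this]
        exact ⟨hTR, hTdiss⟩
    · rwa [hfilter 0 n.zero_le]
  · refine ⟨0, 0, by simp, by omega, fun T hTA hTdiss ↦ ?_⟩
    by_contra! hcard
    obtain ⟨T', hT', hT'R⟩ := exists_subset_card_eq hcard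
    exact hT ⟨T', hT'.trans (hTA.trans (filter_subset _ _)), hT'R,
      hTdiss.subset (by exact_mod_cast hT')⟩

section Span

variable [Fintype G] [DecidableEq G]

theorem exists_mem_addSpan_sub_mem (hH : ∀ x ∈ H, -x ∈ H) (hs : AddDissociatedMod H s) {a : G}
    (ha : ¬ AddDissociatedMod H (insert a s)) : ∃ x ∈ s.addSpan, a - x ∈ H := by
  simp only [AddDissociatedMod, not_forall] at ha
  obtain ⟨t, ht, u, hu, hH', htu⟩ := ha
  rw [subset_insert_iff] at ht hu
  by_cases hat : a ∈ t <;> by_cases hau : a ∈ u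
  · refine absurd (hs _ ht _ hu ?_) fun h ↦ htu ?_
    · rwa [sum_erase_eq_sub hat, sum_erase_eq_sub hau, sub_sub_sub_cancel_right]
    · rw [← insert_erase hat, ← insert_erase hau, h]
  · refine ⟨_, sum_sub_sum_mem_addSpan hu ht, ?_⟩
    rw [erase_eq_of_notMem hau, sum_erase_eq_sub hat]
    convert hH' using 1
    abel
  · refine ⟨_, sum_sub_sum_mem_addSpan ht hu, ?_⟩
    rw [erase_eq_of_notMem hat, sum_erase_eq_sub hau]
    convert hH _ hH' using 1
    abel
  · rw [erase_eq_of_notMem hat] at ht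
    rw [erase_eq_of_notMem hau] at hu
    exact absurd (hs t ht u hu hH') htu

theorem exists_maximal_addDissociatedMod (h0 : 0 ∈ H) (hH : ∀ x ∈ H, -x ∈ H)
    (hZ : AddDissociatedMod H Z) (A : Finset G) :
    ∃ W ⊆ A, AddDissociatedMod H (Z ∪ W) ∧ ∀ a ∈ A, ∃ x ∈ (Z ∪ W).addSpan, a - x ∈ H := by
  classical
  obtain ⟨W, hW⟩ := (A.powerset.filter fun W ↦ AddDissociatedMod H (Z ∪ W)).exists_maximal
    ⟨∅, by simpa using hZ⟩
  have hmem := mem_filter.mp hW.prop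
  rw [mem_powerset] at hmem
  refine ⟨W, hmem.1, hmem.2, fun a ha ↦ ?_⟩
  by_cases haW : a ∈ Z ∪ W
  · exact ⟨a, subset_addSpan haW, by simpa using h0⟩
  refine exists_mem_addSpan_sub_mem hH hmem.2 fun hins ↦ ?_
  have haW' : a ∉ W := fun h ↦ haW (mem_union_right Z h)
  refine hW.not_gt ?_ (ssubset_insert haW')
  rw [mem_filter, mem_powerset, union_insert]
  exact ⟨insert_subset ha hmem.1, hins⟩

/-- The `2 ^ #D` subset sums of `D` are distinct, and each of them is a combination of the elements
of `U` with integer coefficients in `[-#D, #D]`. -/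
theorem two_pow_card_le_of_subset_addSpan (hD : AddDissociated (D : Set G))
    (hDU : D ⊆ U.addSpan) : 2 ^ #D ≤ (2 * #D + 1) ^ #U := by
  choose! ε hε hsum using fun d (hd : d ∈ D) ↦ mem_addSpan.mp (hDU hd)
  let coeff : Finset G → U → ℤ := fun T u ↦ ∑ d ∈ T, ε d u
  have hcoeff : ∀ T ∈ D.powerset, coeff T ∈ Fintype.piFinset fun _ ↦ Icc (-#D : ℤ) #D := by
    intro T hT
    have hT := mem_powerset.mp hT
    refine Fintype.mem_piFinset.mpr fun u ↦ mem_Icc.mpr (abs_le.mp ?_)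
    calc |coeff T u| ≤ ∑ d ∈ T, |ε d u| := abs_sum_le_sum_abs _ _
      _ ≤ ∑ _d ∈ T, 1 := sum_le_sum fun d hd ↦ by
        rcases hε d (hT hd) u with h | h | h <;> simp [h]
      _ ≤ #D := by simpa using card_le_card hT
  have hcombination : ∀ T ⊆ D, ∑ d ∈ T, d = ∑ u : U, coeff T u • (u : G) := by
    intro T hT
    calc ∑ d ∈ T, d = ∑ d ∈ T, ∑ u ∈ U, ε d u • u :=
          sum_congr rfl fun d hd ↦ (hsum d (hT hd)).symm
      _ = ∑ u ∈ U, (∑ d ∈ T, ε d u) • u := by rw [sum_comm]; simp only [sum_smul]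
      _ = ∑ u : U, coeff T u • (u : G) := (sum_coe_sort U fun u ↦ (∑ d ∈ T, ε d u) • u).symm
  have hinj : Set.InjOn coeff D.powerset := by
    intro S hS T hT hST
    rw [mem_coe, mem_powerset] at hS hT
    exact hD (by simpa using hS) (by simpa using hT)
      (by simp only [hcombination S hS, hcombination T hT, hST])
  have hIcc : #(Icc (-#D : ℤ) #D) = 2 * #D + 1 := by
    rw [Int.card_Icc]
    omega
  simpa [Fintype.card_piFinset, hIcc] using card_le_card_of_injOn coeff hcoeff hinj

end Span

theorem exists_subset_addDissociated_union [Finite G] [DecidableEq G]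
    (hZ : AddDissociated (Z : Set G))
    (hD : AddDissociated (D : Set G)) {n r : ℕ} (hn : n ≤ #D)
    (hr : (2 * n + 1) ^ (#Z + r) < 2 ^ n) :
    ∃ W ⊆ D, #W = r ∧ AddDissociated ((Z ∪ W : Finset G) : Set G) := by
  cases nonempty_fintype G
  obtain ⟨D', hD', rfl⟩ := exists_subset_card_eq hn
  obtain ⟨W, hWD, hZW, hspan⟩ := exists_maximal_addDissociatedMod (H := {0}) (by simp) (by simp)
    (addDissociatedMod_zero.mpr hZ) D'
  have hcount := two_pow_card_le_of_subset_addSpan (hD.subset (by exact_mod_cast hD'))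
    (U := Z ∪ W) fun d hd ↦ by
      obtain ⟨x, hx, hdx⟩ := hspan d hd
      rwa [sub_eq_zero.mp hdx]
  have hrW : #Z + r < #Z + #W := by
    by_contra! hle
    exact (hr.trans_le hcount).not_ge
      (Nat.pow_le_pow_right (Nat.succ_pos _) ((card_union_le Z W).trans hle))
  obtain ⟨W', hW', hcard⟩ := exists_subset_card_eq (show r ≤ #W by omega)
  exact ⟨W', hW'.trans (hWD.trans hD'), hcard,
    addDissociatedMod_zero.mp (hZW.subset (union_subset_union_right hW'))⟩

end Dissociation

section Slots

open Finset

/-- The positions of the final ordering: each zone `z : Z` consists of two halves, indexed by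
`Bool`, of `K` positions each, paired up by their index in `K`; the positions in `O` are in no
zone. -/
abbrev Slot (Z K O : Type*) := (Bool × Z × K) ⊕ O

variable {Z K O : Type*}

/-- Exchange the two positions of each pair `j` with `e j = true`. Choosing `e` at random is the
source of randomness in the construction. -/
def Slot.flip (e : Z × K → Bool) : Slot Z K O → Slot Z K O
  | .inl (b, j) => .inl (b ^^ e j, j)
  | .inr o => .inr o

theorem Slot.flip_involutive (e : Z × K → Bool) :
    Function.Involutive (Slot.flip e : Slot Z K O → Slot Z K O) := by
  rintro (⟨b, j⟩ | o) <;> simp [Slot.flip]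

/-- `S` contains the half `b` of the zone `z` and is disjoint from the other half, so that the sum
over `S` is sensitive to all the flips in `z`. -/
def Slot.Separates (S : Finset (Slot Z K O)) (z : Z) (b : Bool) : Prop :=
  ∀ i : K, .inl (b, z, i) ∈ S ∧ .inl (!b, z, i) ∉ S

variable {G : Type*} [AddCommGroup G] {v : Slot Z K O → G} {S : Finset (Slot Z K O)} {z : Z}
  {b : Bool}

section Count

variable [Fintype K]

theorem Slot.Separates.exists_sum_flip_eq (hS : Slot.Separates S z b) :
    ∃ T : Finset (Slot Z K O), (∀ b' i, .inl (b', z, i) ∉ T) ∧ ∀ e : Z × K → Bool,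
      ∑ a ∈ S, v (Slot.flip e a) =
        ∑ a ∈ T, v (Slot.flip e a) + ∑ i, v (.inl (b ^^ e (z, i), z, i)) := by
  classical
  let half : Finset (Slot Z K O) := univ.image fun i ↦ .inl (b, z, i)
  have hhalf : half ⊆ S := by simpa [half, image_subset_iff] using fun i ↦ (hS i).1
  refine ⟨S \ half, fun b' i ↦ ?_, fun e ↦ ?_⟩
  · rcases Bool.eq_or_eq_not b' b with rfl | rfl
    · simp [half]
    · simp [(hS i).2]
  · rw [← sum_sdiff hhalf, sum_image fun i _ j _ hij ↦ by simpa using hij]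
    rfl

theorem flip_eq_of_sum_eq (hv : Function.Injective v)
    (hz : AddDissociated (Set.range fun p : Bool × K ↦ v (.inl (p.1, z, p.2))))
    {e e' : Z × K → Bool}
    (h : ∑ i, v (.inl (b ^^ e (z, i), z, i)) = ∑ i, v (.inl (b ^^ e' (z, i), z, i))) (i : K) :
    e (z, i) = e' (z, i) := by
  classical
  have hsum : ∀ e : Z × K → Bool, ∑ i, v (.inl (b ^^ e (z, i), z, i)) =
      ∑ x ∈ univ.image fun i ↦ v (.inl (b ^^ e (z, i), z, i)), x := fun e ↦
    (sum_image (f := fun x ↦ x) fun i _ j _ hij ↦ by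
      have := hv hij
      grind).symm
  have himage := hz (by simp [Set.range_subset_iff]) (by simp [Set.range_subset_iff])
    ((hsum e).symm.trans (h.trans (hsum e')))
  have hmem := himage ▸ mem_image_of_mem (fun i ↦ v (.inl (b ^^ e (z, i), z, i))) (mem_univ i)
  obtain ⟨j, -, hj⟩ := mem_image.mp hmem
  obtain ⟨hxor, rfl⟩ : (b ^^ e' (z, j)) = (b ^^ e (z, i)) ∧ j = i := by simpa using hv hj
  exact (Bool.xor_right_inj.mp hxor).symm

/-- A flip pattern annihilating the sum over `S` is determined by its restriction to the zones
other than `z`. -/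
theorem card_filter_sum_flip_eq_zero_mul_le [Fintype Z] [DecidableEq Z] [DecidableEq K]
    [DecidableEq G] (hv : Function.Injective v)
    (hz : AddDissociated (Set.range fun p : Bool × K ↦ v (.inl (p.1, z, p.2))))
    (hS : Slot.Separates S z b) :
    #{e : Z × K → Bool | ∑ a ∈ S, v (Slot.flip e a) = 0} * 2 ^ Fintype.card K ≤
      Fintype.card (Z × K → Bool) := by
  obtain ⟨T, hT, hsum⟩ := hS.exists_sum_flip_eq (v := v)
  let overwrite : (Z × K → Bool) × (K → Bool) → Z × K → Bool :=
    fun p j ↦ if j.1 = z then p.2 j.2 else p.1 j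
  set E : Finset (Z × K → Bool) := {e | ∑ a ∈ S, v (Slot.flip e a) = 0} with hE
  have hinj : Set.InjOn overwrite (SetLike.coe (E ×ˢ (univ : Finset (K → Bool)))) := by
    rintro ⟨e, d⟩ hp ⟨e', d'⟩ hp' heq
    have he : ∑ a ∈ S, v (Slot.flip e a) = 0 := by simpa [hE] using hp
    have he' : ∑ a ∈ S, v (Slot.flip e' a) = 0 := by simpa [hE] using hp'
    have hd : d = d' := funext fun i ↦ by simpa [overwrite] using congrFun heq (z, i)
    have hoff : ∀ j, j.1 ≠ z → e j = e' j := fun j hj ↦ by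
      simpa [overwrite, hj] using congrFun heq j
    have hsumT : ∑ a ∈ T, v (Slot.flip e a) = ∑ a ∈ T, v (Slot.flip e' a) := by
      refine sum_congr rfl fun a ha ↦ ?_
      rcases a with ⟨b', z', i⟩ | o
      · rw [Slot.flip, Slot.flip, hoff (z', i) (by rintro rfl; exact hT b' i ha)]
      · rfl
    rw [hsum, hsumT] at he
    rw [hsum] at he'
    have hon := flip_eq_of_sum_eq hv hz (add_left_cancel (he.trans he'.symm))
    refine Prod.ext (funext fun ⟨z', i⟩ ↦ ?_) hd
    rcases eq_or_ne z' z with rfl | hne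
    · exact hon i
    · exact hoff _ hne
  have := card_le_card_of_injOn overwrite (t := univ) (by simp) hinj
  simpa [card_product] using this

theorem exists_flip_forall_sum_ne_zero [Finite Z] (hv : Function.Injective v)
    (hzones : ∀ z, AddDissociated (Set.range fun p : Bool × K ↦ v (.inl (p.1, z, p.2))))
    (F : Finset (Finset (Slot Z K O))) (hF : ∀ S ∈ F, ∃ z b, Slot.Separates S z b)
    (hcard : #F < 2 ^ Fintype.card K) :
    ∃ e : Z × K → Bool, ∀ S ∈ F, ∑ a ∈ S, v (Slot.flip e a) ≠ 0 := by
  classical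
  cases nonempty_fintype Z
  by_contra! hbad
  let bad (S : Finset (Slot Z K O)) : Finset (Z × K → Bool) := {e | ∑ a ∈ S, v (Slot.flip e a) = 0}
  have hcover : univ ⊆ F.biUnion bad := fun e _ ↦ by simpa [bad] using hbad e
  have hpos : 0 < Fintype.card (Z × K → Bool) := Fintype.card_pos
  have : Fintype.card (Z × K → Bool) * 2 ^ Fintype.card K ≤ #F * Fintype.card (Z × K → Bool) :=
    calc _ ≤ (∑ S ∈ F, #(bad S)) * 2 ^ Fintype.card K :=
          Nat.mul_le_mul_right _ ((card_le_card hcover).trans card_biUnion_le)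
      _ = ∑ S ∈ F, #(bad S) * 2 ^ Fintype.card K := sum_mul ..
      _ ≤ ∑ _S ∈ F, Fintype.card (Z × K → Bool) := sum_le_sum fun S hS ↦ by
          obtain ⟨z, b, hSzb⟩ := hF S hS
          exact card_filter_sum_flip_eq_zero_mul_le hv (hzones z) hSzb
      _ = #F * Fintype.card (Z × K → Bool) := by simp
  nlinarith

end Count

end Slots

section Windows

variable {s : ℕ} {K O : Type*}

/-- The block of a slot: block `j < s` has the zones `2 * j` and `2 * j + 1`, and a slot outside the
zones belongs to the block that its label says. -/
def Slot.block (lab : O → ℕ) : Slot (Fin (2 * s)) K O → ℕ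
  | .inl (_, z, _) => z / 2
  | .inr o => lab o

/-- The place of a slot in the final ordering, up to ties. First come the blocks `0, …, s - 1`, each
with the slots outside the zones between the first halves of its two zones, then the blocks `s`,
`s + 1`, `s + 2`, and at last the second halves of the zones `0, …, 2 * s - 1`. -/
def Slot.rank (lab : O → ℕ) : Slot (Fin (2 * s)) K O → ℕ
  | .inl (false, z, _) => 2 * z
  | .inl (true, z, _) => 4 * s + 3 + z
  | .inr o => if lab o < s then 4 * lab o + 1 else 3 * s + lab o

/-- `S` contains every slot that the final ordering puts strictly between two slots of `S`. -/
def Slot.RankConvex (lab : O → ℕ) (S : Finset (Slot (Fin (2 * s)) K O)) : Prop :=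
  ∀ a ∈ S, ∀ b ∈ S, ∀ c, rank lab a < rank lab c → rank lab c < rank lab b → c ∈ S

variable {lab : O → ℕ} {S : Finset (Slot (Fin (2 * s)) K O)}

theorem Slot.rank_le (hlab : ∀ o, lab o ≤ s + 2) (a : Slot (Fin (2 * s)) K O) :
    rank lab a ≤ 6 * s + 2 := by
  rcases a with ⟨_ | _, z, i⟩ | o
  · simp only [rank]; omega
  · simp only [rank]; omega
  · have := hlab o
    simp only [rank]; split_ifs <;> omega

theorem window_cases {lo hi : ℕ} (hle : lo ≤ hi) (hhi : hi ≤ 6 * s + 2)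
    (hfirst : ∀ z < 2 * s, lo < 2 * z → 2 * z < hi → 4 * s + 3 + z ≤ hi)
    (hsecond : ∀ z < 2 * s, lo < 4 * s + 3 + z → 4 * s + 3 + z < hi → lo ≤ 2 * z) :
    (∃ j < s, 4 * j ≤ lo ∧ hi ≤ 4 * j + 3 ∨
      4 * s + 3 + 2 * j ≤ lo ∧ hi ≤ 4 * s + 3 + (2 * j + 1)) ∨
    (∃ i, i + 1 < s ∧ (4 * i + 2 ≤ lo ∧ hi ≤ 4 * i + 4 ∨
      4 * s + 3 + (2 * i + 1) ≤ lo ∧ hi ≤ 4 * s + 3 + (2 * i + 2))) ∨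
    (4 * s - 2 ≤ lo ∧ hi ≤ 4 * s + 3) ∨
    (0 < s ∧ lo = 0 ∧ hi = 6 * s + 2) := by
  rcases lt_or_ge hi (4 * s) with hX | hX
  · have h₁ := hfirst (2 * (lo / 4) + 1)
    have h₂ := hfirst (2 * (lo / 4) + 2)
    rcases eq_or_ne (lo / 4) (hi / 4) with h | h
    · exact .inl ⟨lo / 4, by omega, by omega⟩
    · exact .inr (.inl ⟨lo / 4, by omega, by omega⟩)
  rcases lt_or_ge (4 * s + 2) lo with hY | hY
  · obtain ⟨l, rfl⟩ := Nat.exists_eq_add_of_le (show 4 * s + 3 ≤ lo from hY)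
    have h₁ := hsecond (l + 1)
    rcases Nat.lt_or_ge hi (4 * s + 3 + (2 * (l / 2) + 2)) with h | h
    · exact .inl ⟨l / 2, by omega, by omega⟩
    · exact .inr (.inl ⟨l / 2, by omega, by omega⟩)
  · have h₁ := hfirst (2 * s - 1)
    have h₂ := hsecond 0
    omega

theorem Slot.exists_window (hconv : RankConvex lab S) (hS : S.Nonempty)
    (hlab : ∀ o, lab o ≤ s + 2) (hsep : ∀ z b, ¬ Separates S z b) :
    ∃ lo hi, (∀ a ∈ S, lo ≤ rank lab a ∧ rank lab a ≤ hi) ∧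
      (∀ a, lo < rank lab a → rank lab a < hi → a ∈ S) ∧ lo ≤ hi ∧ hi ≤ 6 * s + 2 ∧
      (∀ z < 2 * s, lo < 2 * z → 2 * z < hi → 4 * s + 3 + z ≤ hi) ∧
      ∀ z < 2 * s, lo < 4 * s + 3 + z → 4 * s + 3 + z < hi → lo ≤ 2 * z := by
  obtain ⟨first, hfirst, hmin⟩ := S.exists_min_image (rank lab) hS
  obtain ⟨last, hlast, hmax⟩ := S.exists_max_image (rank lab) hS
  have hmem := fun a ↦ hconv first hfirst last hlast a
  refine ⟨rank lab first, rank lab last, fun a ha ↦ ⟨hmin a ha, hmax a ha⟩, hmem,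
    hmax first hfirst, rank_le hlab last, fun z hz hlo hhi ↦ ?_, fun z hz hlo hhi ↦ ?_⟩
  · by_contra! hlt
    exact hsep ⟨z, hz⟩ false fun i ↦
      ⟨hmem (.inl (false, ⟨z, hz⟩, i)) hlo hhi, fun h ↦ hlt.not_ge (hmax _ h)⟩
  · by_contra! hlt
    exact hsep ⟨z, hz⟩ true fun i ↦
      ⟨hmem (.inl (true, ⟨z, hz⟩, i)) hlo hhi, fun h ↦ hlt.not_ge (hmin _ h)⟩

theorem Slot.rank_eq_of_le_block {a : Slot (Fin (2 * s)) K O} (h : s ≤ block lab a) :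
    rank lab a = 3 * s + block lab a := by
  rcases a with ⟨_ | _, z, i⟩ | o <;> grind [block, rank]

theorem Slot.exists_block_ne_or_forall_block_eq (hconv : RankConvex lab S)
    (hcentre : ∃ o, lab o = s + 1) :
    (∃ a ∈ S, block lab a ≠ s ∧ block lab a ≠ s + 2) ∨
      (∀ a ∈ S, block lab a = s) ∨ ∀ a ∈ S, block lab a = s + 2 := by
  by_contra! ⟨hwings, ⟨b, hb, hbs⟩, a, ha, has⟩
  obtain ⟨o, ho⟩ := hcentre
  have hab : block lab a = s := by grind
  have hbb : block lab b = s + 2 := hwings b hb hbs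
  have hoo : rank lab (.inr o : Slot (Fin (2 * s)) K O) = 3 * s + (s + 1) := by simp [rank, ho]
  have hmem : .inr o ∈ S := by
    refine hconv a ha b hb _ ?_ ?_
    · rw [rank_eq_of_le_block hab.ge, hab, hoo]; omega
    · rw [rank_eq_of_le_block (a := b) (by omega), hbb, hoo]; omega
  grind [hwings _ hmem, block]

theorem Slot.cases_of_forall_not_separates (hconv : RankConvex lab S) (hS : S.Nonempty)
    (hlab : ∀ o, lab o ≤ s + 2) (hcentre : ∃ o, lab o = s + 1)
    (hsep : ∀ z b, ¬ Separates S z b) :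
    (∃ j < s, ∀ a ∈ S, block lab a = j) ∨
    (∃ i, i + 1 < s ∧ ∀ a ∈ S, ∃ b z k, a = .inl (b, z, k) ∧
      ((z : ℕ) = 2 * i + 1 ∨ (z : ℕ) = 2 * i + 2)) ∨
    ((∀ a ∈ S, block lab a = 0 ∨ block lab a = s - 1 ∨ s ≤ block lab a) ∧
      ((∃ a ∈ S, block lab a ≠ s ∧ block lab a ≠ s + 2) ∨
        (∀ a ∈ S, block lab a = s) ∨ ∀ a ∈ S, block lab a = s + 2)) ∨
    ∀ a, a ∉ S → block lab a = 0 ∨ block lab a = s - 1 := by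
  obtain ⟨lo, hi, hwindow, hmem, hle, hhi, hfirst, hsecond⟩ := exists_window hconv hS hlab hsep
  rcases window_cases hle hhi hfirst hsecond with ⟨j, hj, h⟩ | ⟨i, hi, h⟩ | h | h
  · refine .inl ⟨j, hj, fun a ha ↦ ?_⟩
    have := hwindow a ha
    rcases a with ⟨_ | _, z, i⟩ | o <;> grind [block, rank]
  · refine .inr (.inl ⟨i, hi, fun a ha ↦ ?_⟩)
    have := hwindow a ha
    rcases a with ⟨_ | _, z, i⟩ | o <;> grind [rank]
  · refine .inr (.inr (.inl ⟨fun a ha ↦ ?_, ?_⟩))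
    · have := hwindow a ha
      rcases a with ⟨_ | _, z, i⟩ | o <;> grind [block, rank]
    · exact exists_block_ne_or_forall_block_eq hconv hcentre
  · refine .inr (.inr (.inr fun a ha ↦ ?_))
    have := hmem a
    have := rank_le hlab a
    rcases a with ⟨_ | _, z, i⟩ | o <;> grind [block, rank]

end Windows

section Layout

open Finset

variable {X K O : Type*} {s : ℕ} {A : Finset X} {part : X → ℕ} {Z : Fin (2 * s) → Finset X}
  {lab : O → ℕ} {w : Slot (Fin (2 * s)) K O → X}

/-- `w` distributes the elements of `A` over the slots, in accordance with the partition `part` and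
the zones `Z`. -/
structure IsLayout (A : Finset X) (part : X → ℕ) (Z : Fin (2 * s) → Finset X) (lab : O → ℕ)
    (w : Slot (Fin (2 * s)) K O → X) : Prop where
  injective : Function.Injective w
  range_eq : Set.range w = A
  part_eq : ∀ a, part (w a) = Slot.block lab a
  mem_zone : ∀ b z i, w (.inl (b, z, i)) ∈ Z z

namespace IsLayout

theorem comp_flip (hw : IsLayout A part Z lab w) (e : Fin (2 * s) × K → Bool) :
    IsLayout A part Z lab (w ∘ Slot.flip e) where
  injective := hw.injective.comp (Slot.flip_involutive e).injective
  range_eq := by rw [(Slot.flip_involutive e).surjective.range_comp, hw.range_eq]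
  part_eq := by rintro (⟨b, z, i⟩ | o) <;> exact hw.part_eq _
  mem_zone b z i := hw.mem_zone _ z i

theorem mem (hw : IsLayout A part Z lab w) (a : Slot (Fin (2 * s)) K O) : w a ∈ A := by
  rw [← mem_coe, ← hw.range_eq]
  exact Set.mem_range_self a

theorem image_subset [DecidableEq X] (hw : IsLayout A part Z lab w)
    (S : Finset (Slot (Fin (2 * s)) K O)) : S.image w ⊆ A :=
  image_subset_iff.mpr fun a _ ↦ hw.mem a

theorem image_univ [Fintype K] [Fintype O] [DecidableEq X] (hw : IsLayout A part Z lab w) :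
    univ.image w = A := by
  rw [← coe_inj, coe_image, coe_univ, Set.image_univ, hw.range_eq]

theorem exists_lab_eq (hw : IsLayout A part Z lab w) {j : ℕ} (hj : s ≤ j)
    (h : ∃ a ∈ A, part a = j) : ∃ o, lab o = j := by
  obtain ⟨g, hg, rfl⟩ := h
  rw [← mem_coe, ← hw.range_eq] at hg
  obtain ⟨⟨b, z, i⟩ | o, rfl⟩ := hg
  · rw [hw.part_eq] at hj
    simp only [Slot.block] at hj
    omega
  · exact ⟨o, (hw.part_eq (.inr o)).symm⟩

end IsLayout

end Layout

section Zoning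

open Finset

variable {G : Type*} [AddCommGroup G] {A : Finset G} {part : G → ℕ} {s k : ℕ}

/-- A partition of `A` into blocks from which a sequencing can be built: the blocks `0, …, s - 1`
are dissociated, the blocks `s` and `s + 2` are the two wings, separated by the block `s + 1`, and
the sums that only involve wings and the outer blocks `0` and `s - 1` are under control. -/
structure IsAdmissible (A : Finset G) (part : G → ℕ) (s : ℕ) : Prop where
  part_le : ∀ a ∈ A, part a ≤ s + 2
  addDissociated : ∀ j < s, AddDissociated (SetLike.coe {a ∈ A | part a = j})
  exists_part_eq : ∃ a ∈ A, part a = s + 1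
  sum_ne_zero_of_central : ∀ T ⊆ A, (∀ a ∈ T, part a = 0 ∨ part a = s - 1 ∨ s ≤ part a) →
    (∃ a ∈ T, part a ≠ s ∧ part a ≠ s + 2) → ∑ a ∈ T, a ≠ 0
  sum_ne_zero_of_wing : ∀ T ⊆ A, T.Nonempty →
    ((∀ a ∈ T, part a = s) ∨ ∀ a ∈ T, part a = s + 2) → ∑ a ∈ T, a ≠ 0
  sum_ne_sum_of_outer : ∀ T ⊆ A, T.Nonempty → (∀ a ∈ T, part a = 0 ∨ part a = s - 1) →
    ∑ a ∈ T, a ≠ ∑ a ∈ A, a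

theorem sum_ne_zero_of_addDissociated {D : Set G} (hD : AddDissociated D) {T : Finset G}
    (hTD : ↑T ⊆ D) (hT : T.Nonempty) : ∑ a ∈ T, a ≠ 0 := fun h ↦
  hT.ne_empty (hD hTD (by simp : (∅ : Finset G) ∈ {t : Finset G | ↑t ⊆ D}) (by simpa using h))

/-- `Z z` is the set of elements reserved for the zone `z`. The straddling condition is imposed
because the last zone of a block and the first zone of the next one are adjacent in the ordering. -/
structure IsZoning (A : Finset G) (part : G → ℕ) (s k : ℕ) (Z : Fin (2 * s) → Finset G) :
    Prop where
  subset : ∀ z, Z z ⊆ {a ∈ A | part a = z / 2}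
  card_eq : ∀ z, #(Z z) = 2 * k
  disjoint : Pairwise fun z z' ↦ Disjoint (Z z) (Z z')
  addDissociated : ∀ z z' : Fin (2 * s), (z : ℕ) % 2 = 1 → (z' : ℕ) = z + 1 →
    AddDissociated (Z z ∪ Z z' : Set G)

theorem exists_zone_pairs [Finite G] [DecidableEq G] {n₀ : ℕ}
    (hdiss : ∀ j < s, AddDissociated (SetLike.coe {a ∈ A | part a = j}))
    (hcard : ∀ j < s, 2 * k + n₀ ≤ #{a ∈ A | part a = j})
    (hn₀ : (2 * n₀ + 1) ^ (4 * k) < 2 ^ n₀) :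
    ∃ first last : ℕ → Finset G, ∀ j < s,
      first j ⊆ {a ∈ A | part a = j} ∧ last j ⊆ {a ∈ A | part a = j} ∧
      Disjoint (first j) (last j) ∧ #(first j) = 2 * k ∧ #(last j) = 2 * k ∧
      AddDissociated ((last (j - 1) ∪ first j : Finset G) : Set G) := by
  choose! last hlast hlastcard using fun j (hj : j < s) ↦
    exists_subset_card_eq ((Nat.le_add_right _ _).trans (hcard j hj))
  have hfirst : ∀ j < s, ∃ W ⊆ {a ∈ A | part a = j} \ last j, #W = 2 * k ∧
      AddDissociated ((last (j - 1) ∪ W : Finset G) : Set G) := fun j hj ↦ by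
    have hj' : j - 1 < s := by omega
    have hrest : n₀ ≤ #({a ∈ A | part a = j} \ last j) := by
      rw [card_sdiff_of_subset (hlast j hj), hlastcard j hj]
      have := hcard j hj
      omega
    refine exists_subset_addDissociated_union ((hdiss _ hj').subset (mod_cast hlast _ hj'))
      ((hdiss j hj).subset (mod_cast sdiff_subset)) hrest ?_
    rwa [hlastcard _ hj', ← two_mul, ← mul_assoc]
  choose! first hfirst hfirstcard hunion using hfirst
  exact ⟨first, last, fun j hj ↦ ⟨(hfirst j hj).trans sdiff_subset, hlast j hj,
    disjoint_of_subset_left (hfirst j hj) sdiff_disjoint, hfirstcard j hj, hlastcard j hj,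
    hunion j hj⟩⟩

theorem exists_isZoning [Finite G] {n₀ : ℕ}
    (hdiss : ∀ j < s, AddDissociated (SetLike.coe {a ∈ A | part a = j}))
    (hcard : ∀ j < s, 2 * k + n₀ ≤ #{a ∈ A | part a = j})
    (hn₀ : (2 * n₀ + 1) ^ (4 * k) < 2 ^ n₀) : ∃ Z, IsZoning A part s k Z := by
  classical
  obtain ⟨first, last, h⟩ := exists_zone_pairs hdiss hcard hn₀
  have hz : ∀ z : Fin (2 * s), (z : ℕ) / 2 < s := fun z ↦ by omega
  refine ⟨fun z ↦ if (z : ℕ) % 2 = 0 then first (z / 2) else last (z / 2), fun z ↦ ?_, fun z ↦ ?_,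
    fun z z' hne ↦ disjoint_left.mpr ?_, fun z z' hodd hsucc ↦ ?_⟩
  · have := h _ (hz z)
    grind
  · have := h _ (hz z)
    grind
  · have := Fin.val_ne_of_ne hne
    have := h _ (hz z)
    have := h _ (hz z')
    grind [disjoint_left]
  · have := (h _ (hz z')).2.2.2.2.2
    rw [show (z' : ℕ) / 2 - 1 = z / 2 by omega] at this
    simpa [hodd, show (z' : ℕ) % 2 = 0 by omega] using this

variable {Z : Fin (2 * s) → Finset G}

theorem IsZoning.exists_isLayout (hZ : IsZoning A part s k Z) :
    ∃ w : Slot (Fin (2 * s)) (Fin k) {a // a ∈ A ∧ ∀ z, a ∉ Z z} → G,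
      IsLayout A part Z (fun o ↦ part o.1) w := by
  let zone : ∀ z, Bool × Fin k ≃ Z z := fun z ↦ Fintype.equivOfCardEq (by simp [hZ.card_eq z])
  have hzone : ∀ b z i, (zone z (b, i) : G) ∈ A ∧ part (zone z (b, i)) = z / 2 := fun b z i ↦
    mem_filter.mp (hZ.subset z (zone z (b, i)).2)
  refine ⟨Sum.elim (fun p ↦ zone p.2.1 (p.1, p.2.2)) (fun o ↦ o), ?_, ?_, ?_,
    fun b z i ↦ (zone z (b, i)).2⟩
  · refine Function.Injective.sumElim ?_ Subtype.val_injective ?_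
    · rintro ⟨b, z, i⟩ ⟨b', z', i'⟩ (h : (zone z (b, i) : G) = zone z' (b', i'))
      obtain rfl : z = z' := by
        by_contra hne
        exact disjoint_left.mp (hZ.disjoint hne) (zone z (b, i)).2 (h ▸ (zone z' (b', i')).2)
      simpa using h
    · exact fun ⟨b, z, i⟩ o h ↦ o.2.2 z (h ▸ (zone z (b, i)).2)
  · ext x
    refine ⟨?_, fun hx ↦ ?_⟩
    · rintro ⟨⟨b, z, i⟩ | o, rfl⟩
      · exact (hzone b z i).1
      · exact o.2.1
    · by_cases hxZ : ∃ z, x ∈ Z z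
      · obtain ⟨z, hz⟩ := hxZ
        obtain ⟨⟨b, i⟩, hbi⟩ := (zone z).surjective ⟨x, hz⟩
        exact ⟨.inl (b, z, i), congrArg Subtype.val hbi⟩
      · exact ⟨.inr ⟨x, hx, not_exists.mp hxZ⟩, rfl⟩
  · rintro (⟨b, z, i⟩ | o)
    · exact (hzone b z i).2
    · rfl

variable {K O : Type*} {lab : O → ℕ} {w : Slot (Fin (2 * s)) K O → G}

theorem IsAdmissible.sum_ne_zero_of_forall_not_separates [Fintype K] [Fintype O]
    (hA : IsAdmissible A part s)
    (hZ : IsZoning A part s k Z) (hw : IsLayout A part Z lab w)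
    {S : Finset (Slot (Fin (2 * s)) K O)} (hconv : Slot.RankConvex lab S) (hS : S.Nonempty)
    (hSuniv : S ≠ univ) (hsep : ∀ z b, ¬ Slot.Separates S z b) : ∑ a ∈ S, w a ≠ 0 := by
  classical
  have hsum : ∀ T : Finset (Slot (Fin (2 * s)) K O), ∑ a ∈ T, w a = ∑ x ∈ T.image w, x := fun T ↦
    (sum_image (f := fun x ↦ x) hw.injective.injOn).symm
  have hlab : ∀ o, lab o ≤ s + 2 := fun o ↦ (hw.part_eq (.inr o)).ge.trans (hA.part_le _ (hw.mem _))
  rcases Slot.cases_of_forall_not_separates hconv hS hlab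
    (hw.exists_lab_eq (Nat.le_succ s) hA.exists_part_eq) hsep with
    ⟨j, hj, hblock⟩ | ⟨i, hi, hstraddle⟩ | ⟨hcentral, hex | hwing⟩ | houter
  · rw [hsum]
    refine sum_ne_zero_of_addDissociated (hA.addDissociated j hj) ?_ (hS.image w)
    exact mod_cast image_subset_iff.mpr fun a ha ↦
      mem_filter.mpr ⟨hw.mem a, (hw.part_eq a).trans (hblock a ha)⟩
  · rw [hsum]
    have hlast : 2 * i + 1 < 2 * s := by omega
    have hfirst : 2 * i + 2 < 2 * s := by omega
    refine sum_ne_zero_of_addDissociated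
      (hZ.addDissociated ⟨_, hlast⟩ ⟨_, hfirst⟩ (by simp) rfl) ?_ (hS.image w)
    simp only [Set.subset_def, mem_coe, forall_mem_image]
    intro a ha
    obtain ⟨b, z, k, rfl, hz | hz⟩ := hstraddle a ha
    · exact .inl ((Fin.ext hz : z = ⟨_, hlast⟩) ▸ hw.mem_zone b z k)
    · exact .inr ((Fin.ext hz : z = ⟨_, hfirst⟩) ▸ hw.mem_zone b z k)
  · rw [hsum]
    refine hA.sum_ne_zero_of_central _ (hw.image_subset S) ?_ ?_
    · simpa only [forall_mem_image, hw.part_eq] using hcentral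
    · simpa only [exists_mem_image, hw.part_eq] using hex
  · rw [hsum]
    refine hA.sum_ne_zero_of_wing _ (hw.image_subset S) (hS.image w) ?_
    simpa only [forall_mem_image, hw.part_eq] using hwing
  · have hcompl : ∑ a ∈ Sᶜ, w a ≠ ∑ a, w a := by
      rw [hsum, hsum, hw.image_univ]
      refine hA.sum_ne_sum_of_outer _ (hw.image_subset _) ?_ ?_
      · rwa [image_nonempty, nonempty_iff_ne_empty, Ne, compl_eq_empty_iff]
      · simpa only [forall_mem_image, hw.part_eq, mem_compl] using houter
    rwa [← sum_add_sum_compl S, Ne, right_eq_add] at hcompl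

end Zoning

section Construction

open Finset

theorem exists_finset_toFinset_infix_mem {ι : Type*} [DecidableEq ι] (l : List ι) :
    ∃ F : Finset (Finset ι), #F ≤ (l.length + 1) ^ 2 ∧ ∀ t, t <:+: l → t.toFinset ∈ F := by
  refine ⟨(range (l.length + 1) ×ˢ range (l.length + 1)).image fun p ↦
    ((l.drop p.1).take p.2).toFinset, card_image_le.trans (by simp [sq]), ?_⟩
  rintro t ⟨x, y, rfl⟩
  refine mem_image.mpr ⟨(x.length, t.length), ?_, by simp⟩
  simp only [List.length_append, mem_product, mem_range]
  omega

theorem Slot.rankConvex_toFinset_of_infix {s : ℕ} {K O : Type*}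
    [DecidableEq (Slot (Fin (2 * s)) K O)] {lab : O → ℕ} {l t : List (Slot (Fin (2 * s)) K O)}
    (hsorted : l.Pairwise fun a b ↦ rank lab a ≤ rank lab b) (hl : ∀ a, a ∈ l) (ht : t <:+: l) :
    RankConvex lab t.toFinset := by
  obtain ⟨x, y, rfl⟩ := ht
  simp only [List.pairwise_append, List.mem_append] at hsorted hl
  intro a ha b hb c hac hcb
  rw [List.mem_toFinset] at ha hb ⊢
  rcases hl c with (hc | hc) | hc
  · exact absurd (hsorted.1.2.2 c hc a ha) hac.not_ge
  · exact hc
  · exact absurd (hsorted.2.2 b (.inr hb) c hc) hcb.not_ge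

theorem exists_list_pairwise_le {ι : Type*} [Finite ι] (f : ι → ℕ) :
    ∃ l : List ι, l.Nodup ∧ (∀ a, a ∈ l) ∧ l.Pairwise fun a b ↦ f a ≤ f b := by
  have := Fintype.ofFinite ι
  let r := f ⁻¹'o (· ≤ ·)
  have hperm := List.perm_insertionSort r univ.toList
  exact ⟨_, hperm.nodup_iff.mpr (nodup_toList univ), fun a ↦ hperm.mem_iff.mpr (by simp),
    List.pairwise_insertionSort r univ.toList⟩

variable {G : Type*} [AddCommGroup G] [DecidableEq G] {A : Finset G} {part : G → ℕ} {s k n₀ : ℕ}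

theorem IsAdmissible.sequenceable_of_isLayout {K O : Type*} [Fintype K] [Finite O]
    {Z : Fin (2 * s) → Finset G} {lab : O → ℕ} {v : Slot (Fin (2 * s)) K O → G}
    (hA : IsAdmissible A part s) (hZ : IsZoning A part s k Z) (hv : IsLayout A part Z lab v)
    (hK : (#A + 1) ^ 2 < 2 ^ Fintype.card K) : Sequenceable A := by
  classical
  have := Fintype.ofFinite O
  obtain ⟨l, hl, hlmem, hsorted⟩ := exists_list_pairwise_le (Slot.rank (s := s) (K := K) lab)
  have hluniv : l.toFinset = univ := by ext; simp [hlmem]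
  have hlength : l.length = #A := by
    rw [← List.toFinset_card_of_nodup hl, hluniv, ← hv.image_univ,
      card_image_of_injective _ hv.injective]
  obtain ⟨F, hF, hmemF⟩ := exists_finset_toFinset_infix_mem l
  have hzones : ∀ z, AddDissociated (Set.range fun p : Bool × K ↦ v (.inl (p.1, z, p.2))) :=
    fun z ↦ (hA.addDissociated (z / 2) (by omega)).subset <| by
      rintro _ ⟨p, rfl⟩
      exact hZ.subset z (hv.mem_zone _ _ _)
  obtain ⟨e, he⟩ := exists_flip_forall_sum_ne_zero hv.injective hzones
    {S ∈ F | ∃ z b, Slot.Separates S z b} (fun S hS ↦ (mem_filter.mp hS).2)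
    (((card_filter_le _ _).trans hF).trans_lt (by rwa [hlength]))
  have hw := hv.comp_flip e
  rw [← hw.image_univ, ← hluniv]
  refine sequenceable_image_of_forall_infix hl hw.injective.injOn fun t ht htnil htl ↦ ?_
  by_cases hsep : ∃ z b, Slot.Separates t.toFinset z b
  · exact he _ (mem_filter.mpr ⟨hmemF t ht, hsep⟩)
  · refine hA.sum_ne_zero_of_forall_not_separates hZ hw
      (Slot.rankConvex_toFinset_of_infix hsorted hlmem ht) (by simpa using htnil) (fun huniv ↦ ?_)
      (by simpa using hsep)
    refine htl (ht.eq_of_length ?_)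
    rw [← List.toFinset_card_of_nodup (hl.sublist ht.sublist), huniv, ← hluniv,
      List.toFinset_card_of_nodup hl]

theorem IsAdmissible.sequenceable [Finite G] (hA : IsAdmissible A part s)
    (hcard : ∀ j < s, 2 * k + n₀ ≤ #{a ∈ A | part a = j})
    (hn₀ : (2 * n₀ + 1) ^ (4 * k) < 2 ^ n₀) (hk : (#A + 1) ^ 2 < 2 ^ k) : Sequenceable A := by
  obtain ⟨Z, hZ⟩ := exists_isZoning hA.addDissociated hcard hn₀
  obtain ⟨v, hv⟩ := hZ.exists_isLayout
  exact hA.sequenceable_of_isLayout hZ hv (by simpa using hk)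

end Construction

section Refinement

open Finset

variable {X : Type*} [DecidableEq X]

/-- The partition of the proof in the case of a large set `Q` that is dissociated modulo `H`: the
element `g` of `Q` is the separator, `Q₁` and the rest of `Q` become the two outer blocks, and the
remaining elements of the block `0` go to one of the wings `n + 2` and `n + 4`, according to `P`. -/
def refinedPart (block : X → ℕ) (P : X → Prop) [DecidablePred P] (n : ℕ) (Q Q₁ : Finset X)
    (g a : X) : ℕ :=
  if a = g then n + 3
  else if a ∈ Q₁ then 0
  else if a ∈ Q then n + 1
  else if block a = 0 then if P a then n + 2 else n + 4
  else block a

theorem le_card_filter_refinedPart {A Q Q₁ : Finset X} {g : X} {block : X → ℕ} {P : X → Prop}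
    [DecidablePred P] {n b : ℕ}
    (hblock : ∀ j, 1 ≤ j → j ≤ n → 3 * b + 1 ≤ #{a ∈ A | block a = j})
    (hQA : Q ⊆ A) (hQ : #Q = 2 * b + 1) (hgQ : g ∈ Q) (hQ₁ : Q₁ ⊆ Q.erase g) (hQ₁card : #Q₁ = b)
    {j : ℕ} (hj : j < n + 2) : b ≤ #{a ∈ A | refinedPart block P n Q Q₁ g a = j} := by
  obtain rfl | rfl | ⟨hj, hjn⟩ : j = 0 ∨ j = n + 1 ∨ 1 ≤ j ∧ j ≤ n := by omega
  · exact hQ₁card.ge.trans (card_le_card fun a ha ↦ by grind [refinedPart])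
  · calc b ≤ #(Q.erase g \ Q₁) := by
          rw [card_sdiff_of_subset hQ₁, card_erase_of_mem hgQ]
          omega
      _ ≤ _ := card_le_card fun a ha ↦ by grind [refinedPart]
  · calc b ≤ #({a ∈ A | block a = j} \ Q) := by
          have := le_card_sdiff Q {a ∈ A | block a = j}
          have := hblock j hj hjn
          omega
      _ ≤ _ := card_le_card fun a ha ↦ by grind [refinedPart]

end Refinement

section Assembly

open Finset

variable {G : Type*} [AddCommGroup G] [DecidableEq G] {A Q Q₁ : Finset G} {H : Set G} {g : G}
  {block : G → ℕ} {P : G → Prop} {n : ℕ}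

theorem exists_mem_forall_sum_ne (hQ : AddDissociated (Q : Set G)) (hne : Q.Nonempty) (x : G) :
    ∃ g ∈ Q, ∀ T ⊆ Q.erase g, T.Nonempty → ∑ a ∈ T, a ≠ x := by
  by_cases hx : ∃ T ⊆ Q, T.Nonempty ∧ ∑ a ∈ T, a = x
  · obtain ⟨T, hTQ, ⟨g, hgT⟩, rfl⟩ := hx
    refine ⟨g, hTQ hgT, fun U hU _ hsum ↦ notMem_erase g Q (hU ?_)⟩
    rwa [hQ (mod_cast hU.trans (erase_subset g Q)) (mod_cast hTQ) hsum]
  · push Not at hx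
    obtain ⟨g, hg⟩ := hne
    exact ⟨g, hg, fun T hT ↦ hx T (hT.trans (erase_subset g Q))⟩

theorem isAdmissible_refinedPart [DecidablePred P] (hblock_le : ∀ a ∈ A, block a ≤ n)
    (hblock : ∀ j, 1 ≤ j → j ≤ n → AddDissociated (SetLike.coe {a ∈ A | block a = j}))
    (hH : ∀ x ∈ H, -x ∈ H) (hsumH : ∀ T ⊆ {a ∈ A | block a = 0}, ∑ a ∈ T, a ∈ H)
    (hsign : ∀ T ⊆ {a ∈ A | block a = 0}, T.Nonempty → ((∀ a ∈ T, P a) ∨ ∀ a ∈ T, ¬ P a) →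
      ∑ a ∈ T, a ≠ 0)
    (hQA : Q ⊆ A) (hQ : AddDissociatedMod H Q) (hgQ : g ∈ Q)
    (hg : ∀ T ⊆ Q.erase g, T.Nonempty → ∑ a ∈ T, a ≠ ∑ a ∈ A, a) (hQ₁ : Q₁ ⊆ Q.erase g) :
    IsAdmissible A (refinedPart block P n Q Q₁ g) (n + 2) where
  part_le a ha := by grind [refinedPart]
  addDissociated j hj := by
    by_cases hjn : 1 ≤ j ∧ j ≤ n
    · exact (hblock j hjn.1 hjn.2).subset (mod_cast fun a ha ↦ by grind [refinedPart])
    · have h0 : (0 : G) ∈ H := by simpa using hsumH ∅ (empty_subset _)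
      exact (hQ.addDissociated h0).subset (mod_cast fun a ha ↦ by grind [refinedPart])
  exists_part_eq := ⟨g, hQA hgQ, if_pos rfl⟩
  sum_ne_zero_of_central T hT hpart hex hsum := by
    obtain ⟨c, hcT, hc⟩ := hex
    have hrest : T \ Q ⊆ {a ∈ A | block a = 0} := fun a ha ↦ by grind [refinedPart]
    have hmem : ∑ a ∈ T ∩ Q, a - ∑ a ∈ ∅, a ∈ H := by
      rw [← sum_inter_add_sum_sdiff T Q] at hsum
      rw [sum_empty, sub_zero, eq_neg_of_add_eq_zero_left hsum]
      exact hH _ (hsumH _ hrest)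
    have hempty := hQ _ inter_subset_right ∅ (empty_subset Q) hmem
    have hcQ : c ∈ Q := by grind [refinedPart]
    exact notMem_empty c (hempty ▸ mem_inter.mpr ⟨hcT, hcQ⟩)
  sum_ne_zero_of_wing T hT hne hpart := by
    refine hsign T (fun a ha ↦ by grind [refinedPart]) hne ?_
    refine hpart.imp (fun h a ha ↦ ?_) fun h a ha ↦ ?_ <;>
    · have hpart_a := h a ha
      have hle := hblock_le a (hT ha)
      clear * - hpart_a hle
      grind [refinedPart]
  sum_ne_sum_of_outer T hT hne hpart := by
    refine hg T (fun a ha ↦ ?_) hne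
    grind [refinedPart]

theorem sequenceable_of_addDissociatedMod [Finite G] {k n₀ : ℕ} (hblock_le : ∀ a ∈ A, block a ≤ n)
    (hblock : ∀ j, 1 ≤ j → j ≤ n → #{a ∈ A | block a = j} = 3 * (2 * k + n₀) + 1 ∧
      AddDissociated (SetLike.coe {a ∈ A | block a = j}))
    (hH : ∀ x ∈ H, -x ∈ H) (hsumH : ∀ T ⊆ {a ∈ A | block a = 0}, ∑ a ∈ T, a ∈ H)
    (hsign : ∀ T ⊆ {a ∈ A | block a = 0}, T.Nonempty → ((∀ a ∈ T, P a) ∨ ∀ a ∈ T, ¬ P a) →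
      ∑ a ∈ T, a ≠ 0)
    (hQA : Q ⊆ A) (hQ : AddDissociatedMod H Q) (hQcard : 2 * (2 * k + n₀) + 1 ≤ #Q)
    (hn₀ : (2 * n₀ + 1) ^ (4 * k) < 2 ^ n₀) (hk : (#A + 1) ^ 2 < 2 ^ k) : Sequenceable A := by
  classical
  obtain ⟨Q', hQ'Q, hQ'card⟩ := exists_subset_card_eq hQcard
  have h0 : (0 : G) ∈ H := by simpa using hsumH ∅ (empty_subset _)
  obtain ⟨g, hgQ, hg⟩ := exists_mem_forall_sum_ne ((hQ.subset hQ'Q).addDissociated h0)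
    (card_pos.mp (by omega)) (∑ a ∈ A, a)
  obtain ⟨Q₁, hQ₁, hQ₁card⟩ := exists_subset_card_eq (s := Q'.erase g) (n := 2 * k + n₀) (by
    rw [card_erase_of_mem hgQ]
    omega)
  have hadm := isAdmissible_refinedPart hblock_le (fun j hj hjn ↦ (hblock j hj hjn).2) hH hsumH
    hsign (hQ'Q.trans hQA) (hQ.subset hQ'Q) hgQ hg hQ₁
  exact hadm.sequenceable (fun j hj ↦ le_card_filter_refinedPart
    (fun j hj hjn ↦ (hblock j hj hjn).1.ge) (hQ'Q.trans hQA) hQ'card hgQ hQ₁ hQ₁card hj) hn₀ hk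

end Assembly

section ZMod

open Finset

variable {n : ℕ}

/-- The distance of `x : ZMod n` to `0` on the cycle, that is, the least absolute value of an
integer representing `x`. -/
def absMod (x : ZMod n) : ℕ := x.valMinAbs.natAbs

theorem absMod_neg (x : ZMod n) : absMod (-x) = absMod x := ZMod.natAbs_valMinAbs_neg x

theorem absMod_add_le (x y : ZMod n) : absMod (x + y) ≤ absMod x + absMod y :=
  (ZMod.natAbs_valMinAbs_add_le x y).trans (Int.natAbs_add_le _ _)

theorem sum_eq_zero_of_intCast_eq_zero {ι : Type*} {T : Finset ι} {z : ι → ℤ} {m : ℕ}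
    (hT : #T ≤ m) (hz : ∀ i ∈ T, m * (z i).natAbs < n)
    (h : ((∑ i ∈ T, z i : ℤ) : ZMod n) = 0) : ∑ i ∈ T, z i = 0 := by
  obtain rfl | hne := T.eq_empty_or_nonempty
  · exact sum_empty
  refine Int.eq_zero_of_dvd_of_natAbs_lt_natAbs ((ZMod.intCast_zmod_eq_zero_iff_dvd _ _).mp h) ?_
  rw [Int.natAbs_natCast]
  refine Nat.lt_of_mul_lt_mul_left (a := m) ?_
  calc m * (∑ i ∈ T, z i).natAbs ≤ ∑ i ∈ T, m * (z i).natAbs := by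
        rw [← mul_sum]
        gcongr
        exact Int.natAbs_sum_le _ _
    _ < ∑ _ ∈ T, n := sum_lt_sum_of_nonempty hne hz
    _ = #T * n := by rw [sum_const, smul_eq_mul]
    _ ≤ m * n := by gcongr

theorem sequenceable_of_forall_card_mul_absMod_lt {A : Finset (ZMod n)} (h0 : 0 ∉ A)
    {κ : ZMod n} (hκ : IsUnit κ) (hA : ∀ a ∈ A, #A * absMod (κ * a) < n) : Sequenceable A := by
  obtain ⟨κ, rfl⟩ := hκ
  let lift : ZMod n → ℤ := fun a ↦ (κ * a).valMinAbs
  let proj : ℤ → ZMod n := fun z ↦ κ⁻¹ * z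
  have hproj : Function.LeftInverse proj lift := fun a ↦ by
    simp only [proj, lift, ZMod.coe_valMinAbs, Units.inv_mul_cancel_left]
  have hzero : 0 ∉ A.image lift := by
    simpa [lift, ZMod.valMinAbs_eq_zero] using h0
  have hsum : ∀ T ⊆ A.image lift, ∑ z ∈ T, proj z = 0 → ∑ z ∈ T, z = 0 := by
    intro T hT h
    refine sum_eq_zero_of_intCast_eq_zero (n := n) ((card_le_card hT).trans card_image_le) ?_ ?_
    · intro z hz
      obtain ⟨a, ha, rfl⟩ := mem_image.mp (hT hz)
      exact hA a ha
    · rwa [← mul_sum, Units.mul_right_eq_zero, ← Int.cast_sum] at h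
  have hinj : Set.InjOn proj (A.image lift) := by
    rw [coe_image]
    exact hproj.rightInvOn_range.injOn.mono (Set.image_subset_range lift A)
  have himage : (A.image lift).image proj = A := by
    rw [image_image, hproj.comp_eq_id, image_id]
  exact himage ▸ (sequenceable_of_zero_notMem hzero).image hinj hsum

variable [NeZero n]

theorem absMod_intCast_le (z : ℤ) : absMod (z : ZMod n) ≤ z.natAbs :=
  ZMod.natAbs_min_of_le_div_two n _ z (ZMod.coe_valMinAbs _) (ZMod.natAbs_valMinAbs_le _)

theorem absMod_sum_intCast_mul_le {ι : Type*} (T : Finset ι) (c : ι → ℤ) (x : ι → ZMod n) :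
    absMod (∑ i ∈ T, (c i : ZMod n) * x i) ≤ ∑ i ∈ T, (c i).natAbs * absMod (x i) := by
  have hcast : ∑ i ∈ T, (c i : ZMod n) * x i = ((∑ i ∈ T, c i * (x i).valMinAbs : ℤ) : ZMod n) := by
    simp only [Int.cast_sum, Int.cast_mul, ZMod.coe_valMinAbs]
  calc absMod (∑ i ∈ T, (c i : ZMod n) * x i) ≤ (∑ i ∈ T, c i * (x i).valMinAbs).natAbs :=
        hcast ▸ absMod_intCast_le _
    _ ≤ ∑ i ∈ T, (c i * (x i).valMinAbs).natAbs := Int.natAbs_sum_le _ _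
    _ = ∑ i ∈ T, (c i).natAbs * absMod (x i) := sum_congr rfl fun i _ ↦ Int.natAbs_mul _ _

theorem absMod_sum_le {ι : Type*} (T : Finset ι) (x : ι → ZMod n) :
    absMod (∑ i ∈ T, x i) ≤ ∑ i ∈ T, absMod (x i) := by
  simpa using absMod_sum_intCast_mul_le T 1 x

theorem absMod_natCast_mul_le (μ : ℕ) (x : ZMod n) : absMod ((μ : ZMod n) * x) ≤ μ * absMod x := by
  simpa using absMod_sum_intCast_mul_le {()} (fun _ ↦ μ) fun _ ↦ x

theorem mul_absMod_sub_le_of_div_eq {N : ℕ} {x y : ZMod n} (h : N * x.val / n = N * y.val / n) :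
    N * absMod (x - y) ≤ n := by
  have hn := NeZero.pos n
  have hxy : x - y = ((x.val - y.val : ℤ) : ZMod n) := by simp
  have hx := Nat.div_add_mod (N * x.val) n
  have hy := Nat.div_add_mod (N * y.val) n
  have hx' := Nat.mod_lt (N * x.val) hn
  have hy' := Nat.mod_lt (N * y.val) hn
  rw [h] at hx
  calc N * absMod (x - y) ≤ N * (x.val - y.val : ℤ).natAbs :=
        Nat.mul_le_mul_left N (hxy ▸ absMod_intCast_le _)
    _ = (N * x.val - N * y.val : ℤ).natAbs := by rw [← mul_sub, Int.natAbs_mul, Int.natAbs_natCast]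
    _ ≤ n := by
        zify at hx hy hx' hy' ⊢
        rw [abs_le]
        constructor <;> linarith [Nat.zero_le (N * x.val % n), Nat.zero_le (N * y.val % n)]

theorem exists_forall_mul_absMod_natCast_mul_le {ι : Type*} (Q : Finset ι) (x : ι → ZMod n)
    {N : ℕ} (hN : 0 < N) :
    ∃ μ : ℕ, 0 < μ ∧ μ ≤ N ^ #Q ∧ ∀ i ∈ Q, N * absMod ((μ : ZMod n) * x i) ≤ n := by
  classical
  have hcell (j : ℕ) :
      (fun i : Q ↦ N * ((j : ZMod n) * x i).val / n) ∈ Fintype.piFinset fun _ ↦ range N :=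
    Fintype.mem_piFinset.mpr fun i ↦ mem_range.mpr <| (Nat.div_lt_iff_lt_mul (NeZero.pos n)).mpr <|
      Nat.mul_lt_mul_of_pos_left (ZMod.val_lt _) hN
  obtain ⟨j, hj, l, hl, hjl, heq⟩ := exists_ne_map_eq_of_card_lt_of_maps_to
    (s := range (N ^ #Q + 1)) (by simp) fun j _ ↦ hcell j
  wlog hlt : l < j generalizing j l
  · exact this l hl j hj hjl.symm heq.symm (by omega)
  rw [mem_range] at hj
  refine ⟨j - l, by omega, by omega, fun i hi ↦ ?_⟩
  rw [Nat.cast_sub hlt.le, sub_mul]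
  exact mul_absMod_sub_le_of_div_eq (congrFun heq ⟨i, hi⟩)

theorem exists_forall_mem_addSpan_mul_absMod_le {Q : Finset (ZMod n)} {r N : ℕ} (hQ : #Q ≤ r)
    (hr : 0 < r) (hN : 0 < N) (κ : ZMod n) :
    ∃ μ : ℕ, 0 < μ ∧ μ ≤ (r * N) ^ r ∧
      ∀ x ∈ Q.addSpan, N * absMod ((μ : ZMod n) * (κ * x)) ≤ n := by
  obtain ⟨μ, hμ, hμle, hsmall⟩ :=
    exists_forall_mul_absMod_natCast_mul_le Q (fun x ↦ κ * x) (Nat.mul_pos hr hN)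
  refine ⟨μ, hμ, hμle.trans (Nat.pow_le_pow_right (Nat.mul_pos hr hN) hQ), fun x hx ↦ ?_⟩
  obtain ⟨ε, hε, rfl⟩ := mem_addSpan.mp hx
  have hε' (y) : (ε y).natAbs ≤ 1 := by
    rcases hε y with h | h | h <;> simp [h]
  have hexpand : (μ : ZMod n) * (κ * ∑ y ∈ Q, ε y • y) = ∑ y ∈ Q, ε y * (μ * (κ * y)) := by
    simp only [mul_sum, zsmul_eq_mul]
    exact sum_congr rfl fun y _ ↦ by ring
  refine Nat.le_of_mul_le_mul_left ?_ hr
  calc r * (N * absMod ((μ : ZMod n) * (κ * ∑ y ∈ Q, ε y • y)))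
      ≤ r * N * ∑ y ∈ Q, (ε y).natAbs * absMod ((μ : ZMod n) * (κ * y)) := by
        rw [← mul_assoc, hexpand]
        gcongr
        exact absMod_sum_intCast_mul_le _ _ _
    _ ≤ ∑ y ∈ Q, r * N * absMod ((μ : ZMod n) * (κ * y)) := by
        rw [mul_sum]
        gcongr with y
        exact mul_le_of_le_one_left' (hε' y)
    _ ≤ #Q * n := sum_le_card_nsmul _ _ _ hsmall
    _ ≤ r * n := by gcongr

end ZMod

section Dilation

open Finset

variable {n : ℕ} {A : Finset (ZMod n)}

theorem isUnit_natCast_of_lt_minFac {μ : ℕ} (hμ : 0 < μ) (h : μ < n.minFac) :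
    IsUnit (μ : ZMod n) :=
  (ZMod.isUnit_iff_coprime μ n).mpr (Nat.coprime_of_lt_minFac hμ.ne' h).symm

theorem sum_ne_zero_of_same_sign {κ : ZMod n} (hκ : IsUnit κ) {T : Finset (ZMod n)} {m : ℕ}
    (hT : #T ≤ m) (h0 : 0 ∉ T) (hne : T.Nonempty) (hsmall : ∀ a ∈ T, m * absMod (κ * a) < n)
    (hsign : (∀ a ∈ T, 0 < (κ * a).valMinAbs) ∨ ∀ a ∈ T, ¬ 0 < (κ * a).valMinAbs) :
    ∑ a ∈ T, a ≠ 0 := by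
  intro hsum
  have hlift : ∑ a ∈ T, (κ * a).valMinAbs = 0 := by
    refine sum_eq_zero_of_intCast_eq_zero (n := n) hT hsmall ?_
    rw [Int.cast_sum]
    simp only [ZMod.coe_valMinAbs]
    rw [← mul_sum, hsum, mul_zero]
  rcases hsign with hpos | hneg
  · exact (sum_pos hpos hne).ne' hlift
  · refine (sum_neg (fun a ha ↦ (not_lt.mp (hneg a ha)).lt_of_ne ?_) hne).ne hlift
    rw [Ne, ZMod.valMinAbs_eq_zero, hκ.mul_right_eq_zero]
    exact ne_of_mem_of_not_mem ha h0

variable [NeZero n]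

theorem exists_forall_mul_absMod_le_of_forall_addDissociated {R N : ℕ} (hR : 0 < R) (hN : 0 < N)
    (hA : ∀ T ⊆ A, AddDissociated (T : Set (ZMod n)) → #T < R) :
    ∃ μ : ℕ, 0 < μ ∧ μ ≤ (R * N) ^ R ∧ ∀ a ∈ A, N * absMod ((μ : ZMod n) * a) ≤ n := by
  obtain ⟨T, -, hTcard, hspan⟩ :=
    exists_subset_addSpan_card_le_of_forall_addDissociated fun T hT hdiss ↦ (hA T hT hdiss).le
  obtain ⟨μ, hμ, hμle, hsmall⟩ := exists_forall_mem_addSpan_mul_absMod_le hTcard hR hN 1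
  exact ⟨μ, hμ, hμle, fun a ha ↦ by simpa only [one_mul] using hsmall a (hspan ha)⟩

theorem mul_absMod_mul_sum_le {κ : ZMod n} {T : Finset (ZMod n)} {m N : ℕ} (hm : 0 < m)
    (hT : #T ≤ m) (hsmall : ∀ a ∈ T, m * N * absMod (κ * a) ≤ n) :
    N * absMod (κ * ∑ a ∈ T, a) ≤ n := by
  refine Nat.le_of_mul_le_mul_left ?_ hm
  calc m * (N * absMod (κ * ∑ a ∈ T, a)) ≤ ∑ a ∈ T, m * N * absMod (κ * a) := by
        rw [← mul_assoc, ← mul_sum, mul_sum (a := κ)]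
        gcongr
        exact absMod_sum_le _ _
    _ ≤ #T * n := sum_le_card_nsmul _ _ _ hsmall
    _ ≤ m * n := by gcongr

theorem sequenceable_of_forall_exists_mem_addSpan (h0 : 0 ∉ A) {Q : Finset (ZMod n)} {κ : ZMod n}
    (hκ : IsUnit κ) {q M : ℕ} (hq : 0 < q) (hQ : #Q ≤ q) (hM : (q * (4 * #A)) ^ q ≤ M)
    (hMn : M < n.minFac)
    (hspan : ∀ a ∈ A, ∃ x ∈ Q.addSpan, 4 * #A * M * absMod (κ * (a - x)) ≤ n) :
    Sequenceable A := by
  obtain rfl | hne := A.eq_empty_or_nonempty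
  · exact sequenceable_empty
  have hcard := card_pos.mpr hne
  obtain ⟨μ, hμ, hμle, hsmall⟩ :=
    exists_forall_mem_addSpan_mul_absMod_le hQ hq (N := 4 * #A) (by omega) κ
  have hμM := hμle.trans hM
  have hμunit := isUnit_natCast_of_lt_minFac hμ (hμM.trans_lt hMn)
  refine sequenceable_of_forall_card_mul_absMod_lt h0 (hμunit.mul hκ) fun a ha ↦ ?_
  obtain ⟨x, hx, hax⟩ := hspan a ha
  have hbound : 4 * #A * absMod ((μ : ZMod n) * κ * a) ≤ n + n := by
    calc 4 * #A * absMod ((μ : ZMod n) * κ * a)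
        = 4 * #A * absMod ((μ : ZMod n) * (κ * x) + (μ : ZMod n) * (κ * (a - x))) := by ring_nf
      _ ≤ 4 * #A * (absMod ((μ : ZMod n) * (κ * x)) + M * absMod (κ * (a - x))) := by
          gcongr
          refine (absMod_add_le _ _).trans (Nat.add_le_add_left ?_ _)
          exact (absMod_natCast_mul_le _ _).trans (Nat.mul_le_mul_right _ hμM)
      _ = 4 * #A * absMod ((μ : ZMod n) * (κ * x)) + 4 * #A * M * absMod (κ * (a - x)) := by ring
      _ ≤ n + n := Nat.add_le_add (hsmall x hx) hax
  have := NeZero.pos n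
  linarith

theorem sequenceable_of_forall_mul_absMod_le (h0 : 0 ∉ A) {block : ZMod n → ℕ} {s k n₀ M : ℕ}
    (hblock_le : ∀ a ∈ A, block a ≤ s)
    (hblock : ∀ j, 1 ≤ j → j ≤ s → #{a ∈ A | block a = j} = 3 * (2 * k + n₀) + 1 ∧
      AddDissociated (SetLike.coe {a ∈ A | block a = j}))
    {κ : ZMod n} (hκ : IsUnit κ)
    (hsmall : ∀ a ∈ A, block a = 0 → #A * (4 * #A * M) * absMod (κ * a) ≤ n)
    (hM : ((2 * (2 * k + n₀) + 1) * (4 * #A)) ^ (2 * (2 * k + n₀) + 1) ≤ M) (hMn : M < n.minFac)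
    (hn₀ : (2 * n₀ + 1) ^ (4 * k) < 2 ^ n₀) (hk : (#A + 1) ^ 2 < 2 ^ k) : Sequenceable A := by
  obtain rfl | hne := A.eq_empty_or_nonempty
  · exact sequenceable_empty
  have hcard := card_pos.mpr hne
  have hsmall' {a} (ha : a ∈ ({a ∈ A | block a = 0} : Finset _)) :=
    hsmall a (mem_filter.mp ha).1 (mem_filter.mp ha).2
  have hcard_le {T : Finset (ZMod n)} (hT : T ⊆ {a ∈ A | block a = 0}) : #T ≤ #A :=
    card_le_card (hT.trans (filter_subset _ _))
  let H : Set (ZMod n) := {x | 4 * #A * M * absMod (κ * x) ≤ n}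
  have hH : ∀ x ∈ H, -x ∈ H := fun x hx ↦ by
    simpa only [H, Set.mem_ofPred_eq, mul_neg, absMod_neg] using hx
  have hsumH : ∀ T ⊆ {a ∈ A | block a = 0}, ∑ a ∈ T, a ∈ H := fun T hT ↦
    mul_absMod_mul_sum_le hcard (hcard_le hT) fun a ha ↦ hsmall' (hT ha)
  have hsign (T : Finset (ZMod n)) (hT : T ⊆ {a ∈ A | block a = 0}) (hne : T.Nonempty) :
      ((∀ a ∈ T, 0 < (κ * a).valMinAbs) ∨ ∀ a ∈ T, ¬ 0 < (κ * a).valMinAbs) → ∑ a ∈ T, a ≠ 0 := by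
    refine sum_ne_zero_of_same_sign hκ (hcard_le hT) (fun h ↦ h0 (mem_filter.mp (hT h)).1) hne ?_
    intro a ha
    have hMpos : 0 < M := lt_of_lt_of_le (by positivity) hM
    have := Nat.le_mul_of_pos_left (#A * absMod (κ * a)) (Nat.mul_pos hcard hMpos)
    linarith [hsmall' (hT ha), NeZero.pos n]
  obtain ⟨Q, hQA, hQ, hspan⟩ := exists_maximal_addDissociatedMod (Z := ∅) (H := H)
    (by simpa using hsumH ∅ (empty_subset _)) hH (by simp [AddDissociatedMod]) A
  rw [empty_union] at hQ hspan
  obtain hlt | hge := lt_or_ge #Q (2 * (2 * k + n₀) + 1)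
  · exact sequenceable_of_forall_exists_mem_addSpan h0 hκ (by omega) hlt.le hM hMn hspan
  · exact sequenceable_of_addDissociatedMod hblock_le hblock hH hsumH hsign hQA hQ hge hn₀ hk

theorem sequenceable_of_lt_minFac (h0 : 0 ∉ A) {k n₀ R M : ℕ}
    (hR : 3 * (2 * k + n₀) + 1 = R)
    (hM : ((2 * (2 * k + n₀) + 1) * (4 * #A)) ^ (2 * (2 * k + n₀) + 1) = M)
    (hn : (R * (#A * (4 * #A * M))) ^ R < n.minFac) (hn₀ : (2 * n₀ + 1) ^ (4 * k) < 2 ^ n₀)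
    (hk : (#A + 1) ^ 2 < 2 ^ k) : Sequenceable A := by
  obtain rfl | hne := A.eq_empty_or_nonempty
  · exact sequenceable_empty
  have hRpos : 0 < R := by omega
  have hMpos : 0 < M := by rw [← hM]; positivity
  have hMn : M < n.minFac := by
    refine lt_of_le_of_lt ?_ hn
    calc M ≤ R * (#A * (4 * #A)) * M := Nat.le_mul_of_pos_left M (by positivity)
      _ = R * (#A * (4 * #A * M)) := by ring
      _ ≤ _ := Nat.le_self_pow hRpos.ne' _
  obtain ⟨s, block, hblock_le, hblock, hrest⟩ := exists_decomposition hRpos A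
  obtain ⟨μ, hμ, hμle, hsmall⟩ := exists_forall_mul_absMod_le_of_forall_addDissociated hRpos
    (N := #A * (4 * #A * M)) (by positivity) hrest
  exact sequenceable_of_forall_mul_absMod_le h0 hblock_le (hR ▸ hblock)
    (isUnit_natCast_of_lt_minFac hμ (hμle.trans_lt hn))
    (fun a ha hzero ↦ hsmall a (mem_filter.mpr ⟨ha, hzero⟩)) hM.le hMn hn₀ hk

end Dilation

section Parameters

open Finset

variable {m u : ℕ}

theorem pow_three_le_two_pow (u : ℕ) : u ^ 3 ≤ 2 ^ (3 * u) := by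
  rw [mul_comm, pow_mul]
  exact Nat.pow_le_pow_left Nat.lt_two_pow_self.le 3

theorem pow_lt_two_pow_mul_pow_three (hu : 0 < u) :
    (2 * (64 * u ^ 3) + 1) ^ (4 * u ^ 2) < 2 ^ (64 * u ^ 3) := by
  have hbase : 2 * (64 * u ^ 3) + 1 < 2 ^ (16 * u) :=
    calc 2 * (64 * u ^ 3) + 1 < 2 ^ 8 * u ^ 3 := by have := Nat.pow_pos (n := 3) hu; omega
      _ ≤ 2 ^ 8 * 2 ^ (3 * u) := Nat.mul_le_mul_left _ (pow_three_le_two_pow u)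
      _ = 2 ^ (8 + 3 * u) := (pow_add _ _ _).symm
      _ ≤ 2 ^ (16 * u) := Nat.pow_le_pow_right two_pos (by omega)
  calc (2 * (64 * u ^ 3) + 1) ^ (4 * u ^ 2) < (2 ^ (16 * u)) ^ (4 * u ^ 2) :=
        Nat.pow_lt_pow_left hbase (by positivity)
    _ = 2 ^ (64 * u ^ 3) := by rw [← pow_mul]; congr 1; ring

theorem mul_pow_three_mul_le_two_pow {a x : ℕ} (hu : 0 < u) (ha : a ≤ 2 ^ 10)
    (hx : x ≤ 2 ^ (u ^ 2)) : a * u ^ 3 * x ≤ 2 ^ (14 * u ^ 2) := by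
  have hsq : u ≤ u ^ 2 := Nat.le_self_pow two_ne_zero u
  calc a * u ^ 3 * x ≤ 2 ^ 10 * 2 ^ (3 * u) * 2 ^ (u ^ 2) :=
        Nat.mul_le_mul (Nat.mul_le_mul ha (pow_three_le_two_pow u)) hx
    _ = 2 ^ (10 + 3 * u + u ^ 2) := by rw [pow_add, pow_add]
    _ ≤ 2 ^ (14 * u ^ 2) := Nat.pow_le_pow_right two_pos (by omega)

theorem mul_mul_pow_pow_le_two_pow {q R : ℕ} (hu : 0 < u) (hq : q ≤ 133 * u ^ 3)
    (hR : R ≤ 199 * u ^ 3) (hm : (m + 1) ^ 2 < 2 ^ (u ^ 2)) :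
    (R * (m * (4 * m * (q * (4 * m)) ^ q))) ^ R ≤ 2 ^ (2 ^ 24 * u ^ 8) := by
  have hm_sq : m ^ 2 ≤ 2 ^ (u ^ 2) := (Nat.pow_le_pow_left m.le_succ 2).trans hm.le
  have hm_le : m ≤ 2 ^ (u ^ 2) := (Nat.le_self_pow two_ne_zero m).trans hm_sq
  have hM : (q * (4 * m)) ^ q ≤ 2 ^ (1862 * u ^ 5) :=
    calc (q * (4 * m)) ^ q ≤ (2 ^ (14 * u ^ 2)) ^ q := by
          refine Nat.pow_le_pow_left ?_ q
          calc q * (4 * m) ≤ 133 * u ^ 3 * (4 * m) := Nat.mul_le_mul_right _ hq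
            _ = 532 * u ^ 3 * m := by ring
            _ ≤ 2 ^ (14 * u ^ 2) := mul_pow_three_mul_le_two_pow hu (by norm_num) hm_le
      _ ≤ (2 ^ (14 * u ^ 2)) ^ (133 * u ^ 3) := Nat.pow_le_pow_right (by positivity) hq
      _ = 2 ^ (1862 * u ^ 5) := by rw [← pow_mul]; congr 1; ring
  have hbase : R * (m * (4 * m * (q * (4 * m)) ^ q)) ≤ 2 ^ (1876 * u ^ 5) :=
    calc R * (m * (4 * m * (q * (4 * m)) ^ q))
        ≤ 199 * u ^ 3 * (m * (4 * m * 2 ^ (1862 * u ^ 5))) := by gcongr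
      _ = 796 * u ^ 3 * m ^ 2 * 2 ^ (1862 * u ^ 5) := by ring
      _ ≤ 2 ^ (14 * u ^ 2) * 2 ^ (1862 * u ^ 5) :=
          Nat.mul_le_mul_right _ (mul_pow_three_mul_le_two_pow hu (by norm_num) hm_sq)
      _ = 2 ^ (14 * u ^ 2 + 1862 * u ^ 5) := (pow_add _ _ _).symm
      _ ≤ 2 ^ (1876 * u ^ 5) := by
          refine Nat.pow_le_pow_right two_pos ?_
          have : u ^ 2 ≤ u ^ 5 := Nat.pow_le_pow_right hu (by norm_num)
          omega
  calc (R * (m * (4 * m * (q * (4 * m)) ^ q))) ^ R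
      ≤ (2 ^ (1876 * u ^ 5)) ^ (199 * u ^ 3) :=
        (Nat.pow_le_pow_left hbase R).trans (Nat.pow_le_pow_right (by positivity) hR)
    _ = 2 ^ (373324 * u ^ 8) := by rw [← pow_mul]; congr 1; ring
    _ ≤ 2 ^ (2 ^ 24 * u ^ 8) := by gcongr <;> norm_num

theorem sequenceable_of_two_pow_lt_minFac {n : ℕ} [NeZero n] {A : Finset (ZMod n)} (h0 : 0 ∉ A)
    (hu : 0 < u) (hcard : (#A + 1) ^ 2 < 2 ^ (u ^ 2)) (hn : 2 ^ (2 ^ 24 * u ^ 8) < n.minFac) :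
    Sequenceable A := by
  have hsq : u ^ 2 ≤ u ^ 3 := Nat.pow_le_pow_right hu (by norm_num)
  have hone : 1 ≤ u ^ 3 := Nat.one_le_pow _ _ hu
  refine sequenceable_of_lt_minFac h0 (k := u ^ 2) (n₀ := 64 * u ^ 3) rfl rfl ?_
    (pow_lt_two_pow_mul_pow_three hu) hcard
  exact (mul_mul_pow_pow_le_two_pow hu (by omega) (by omega) hcard).trans_lt hn

theorem exists_pow_eight_le_rpow_le {L : ℝ} (hL : 2 ^ 32 ≤ L) :
    ∃ u : ℕ, 2 ≤ u ∧ 2 ^ 24 * (u : ℝ) ^ 8 ≤ L ∧ L ^ ((1 : ℝ) / 4) ≤ 256 * (u : ℝ) ^ 2 := by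
  have hL0 : 0 ≤ L := le_trans (by positivity) hL
  set x := L ^ ((1 : ℝ) / 8) with hx
  have hx0 : 0 ≤ x := Real.rpow_nonneg hL0 _
  have hx8 : x ^ 8 = L := by
    rw [hx, ← Real.rpow_mul_natCast hL0]
    norm_num
  have hx2 : L ^ ((1 : ℝ) / 4) = x ^ 2 := by
    rw [hx, ← Real.rpow_mul_natCast hL0]
    norm_num
  have hx16 : 16 ≤ x := by
    refine le_of_pow_le_pow_left₀ (n := 8) (by norm_num) hx0 ?_
    rw [hx8]
    exact le_trans (by norm_num) hL
  have hfloor : (2 : ℕ) ≤ ⌊x / 8⌋₊ := Nat.le_floor (by push_cast; linarith)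
  have hle : (⌊x / 8⌋₊ : ℝ) ≤ x / 8 := Nat.floor_le (by positivity)
  have hlt : x / 8 < ⌊x / 8⌋₊ + 1 := Nat.lt_floor_add_one _
  have hfloor_cast : (2 : ℝ) ≤ ⌊x / 8⌋₊ := mod_cast hfloor
  refine ⟨⌊x / 8⌋₊, hfloor, ?_, ?_⟩
  · calc 2 ^ 24 * (⌊x / 8⌋₊ : ℝ) ^ 8 ≤ 2 ^ 24 * (x / 8) ^ 8 := by gcongr
      _ = L := by rw [← hx8]; ring
  · calc L ^ ((1 : ℝ) / 4) = x ^ 2 := hx2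
      _ ≤ (16 * ⌊x / 8⌋₊) ^ 2 := by gcongr; linarith
      _ = 256 * (⌊x / 8⌋₊ : ℝ) ^ 2 := by ring

theorem add_one_sq_lt_two_pow_sq (hu : 2 ≤ u) (hm : (m : ℝ) ≤ Real.exp ((u : ℝ) ^ 2 / 16)) :
    (m + 1) ^ 2 < 2 ^ (u ^ 2) := by
  have hu' : (2 : ℝ) ≤ u := mod_cast hu
  have hexp : 1 ≤ Real.exp ((u : ℝ) ^ 2 / 16) := Real.one_le_exp (by positivity)
  have hexponent : 2 * (Real.log 2 + (u : ℝ) ^ 2 / 16) < (u ^ 2 : ℕ) * Real.log 2 := by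
    push_cast
    nlinarith [Real.log_two_gt_d9, Real.log_two_lt_d9]
  have hreal : ((m : ℝ) + 1) ^ 2 < 2 ^ (u ^ 2) := by
    calc ((m : ℝ) + 1) ^ 2 ≤ (2 * Real.exp ((u : ℝ) ^ 2 / 16)) ^ 2 := by gcongr; linarith
      _ = Real.exp (2 * (Real.log 2 + (u : ℝ) ^ 2 / 16)) := by
          rw [← Nat.cast_two (R := ℝ), Real.exp_nat_mul, Nat.cast_two, Real.exp_add,
            Real.exp_log two_pos]
      _ < Real.exp ((u ^ 2 : ℕ) * Real.log 2) := Real.exp_lt_exp.mpr hexponent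
      _ = 2 ^ (u ^ 2) := by rw [Real.exp_nat_mul, Real.exp_log two_pos]
  exact mod_cast hreal

theorem two_pow_lt_of_le_log {N P : ℕ} (hN : 0 < N) (hP : 0 < P) (h : (N : ℝ) ≤ Real.log P) :
    2 ^ N < P := by
  have hlog : (N : ℝ) * Real.log 2 < Real.log P := by
    have hN' : (0 : ℝ) < N := mod_cast hN
    nlinarith [Real.log_two_lt_d9]
  rw [← Real.log_pow, Real.log_lt_log_iff (by positivity) (mod_cast hP)] at hlog
  exact mod_cast hlog

end Parameters

theorem bedert_kravitz_bound_general :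
    ∃ c : ℝ, 0 < c ∧ ∃ P₀ : ℕ, ∀ n : ℕ, P₀ ≤ n.minFac →
      ∀ A : Finset (ZMod n), (0 : ZMod n) ∉ A →
        (A.card : ℝ) ≤ Real.exp (c * Real.log (n.minFac : ℝ) ^ ((1 : ℝ) / 4)) →
          Sequenceable A := by
  refine ⟨1 / 4096, by norm_num, ⌈Real.exp (2 ^ 32)⌉₊, fun n hn A h0 hA ↦ ?_⟩
  have hexp : Real.exp (2 ^ 32) ≤ n.minFac := Nat.ceil_le.mp hn
  have hlog : 2 ^ 32 ≤ Real.log n.minFac :=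
    (Real.le_log_iff_exp_le (mod_cast n.minFac_pos)).mpr hexp
  have : NeZero n := ⟨by
    rintro rfl
    norm_num at hexp
    linarith [Real.add_one_le_exp (4294967296 : ℝ)]⟩
  obtain ⟨u, hu, hu_pow, hu_sq⟩ := exists_pow_eight_le_rpow_le hlog
  have hcard : (A.card : ℝ) ≤ Real.exp ((u : ℝ) ^ 2 / 16) :=
    hA.trans (Real.exp_le_exp.mpr (by linarith))
  exact sequenceable_of_two_pow_lt_minFac h0 (by omega) (add_one_sq_lt_two_pow_sq hu hcard)
    (two_pow_lt_of_le_log (by positivity) n.minFac_pos (mod_cast hu_pow))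

/-- There exist an absolute constant `c > 0` and a threshold `p₀` such that for every
prime `p ≥ p₀`, every subset `A ⊆ ℤ_p \ {0}` with `|A| ≤ exp(c (log p)^(1/4))` is
sequenceable. -/
theorem bedert_kravitz_bound :
    ∃ c : ℝ, 0 < c ∧ ∃ p₀ : ℕ,
      ∀ p : ℕ, p.Prime → p₀ ≤ p →
        ∀ A : Finset (ZMod p), (0 : ZMod p) ∉ A →
          (A.card : ℝ) ≤ Real.exp (c * (Real.log (p : ℝ)) ^ ((1 : ℝ) / 4)) →
            Sequenceable A := by
  obtain ⟨c, hc, P₀, h⟩ := bedert_kravitz_bound_general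
  exact ⟨c, hc, P₀, fun p hp hle ↦ by simpa only [hp.minFac_eq, hle, true_imp_iff] using h p⟩
end

section
/- There exists an absolute constant c_1 > 0 such that the following holds: for every integer k ≥ 2 with least prime divisor p, if B ⊆ ℤ_k is a nonempty subset with dim(B) < c_1·(log p)^{1/2}, then there exists a unit λ ∈ ℤ_k^× such that every element of the dilate λ·B = {λb : b ∈ B} has an integer representative of absolute value strictly less than k/(100|B|), i.e. λ·B is contained in the interval (−k/(100|B|), k/(100|B|)). -/
/-- A finite subset `D` of an abelian group is *dissociated* if no nontrivial
`{-1,0,1}`-combination of its elements vanishes. -/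
def Dissociated {G : Type*} [AddCommGroup G] (D : Finset G) : Prop :=
  ∀ ε : G → ℤ, (∀ d ∈ D, ε d = -1 ∨ ε d = 0 ∨ ε d = 1) →
    (∑ d ∈ D, ε d • d) = 0 → ∀ d ∈ D, ε d = 0

/-- The *dimension* of a finite subset `B` of an abelian group: the size of the largest
dissociated subset of `B`. -/
noncomputable def dimension {G : Type*} [AddCommGroup G] [DecidableEq G] (B : Finset G) : ℕ :=
  (@Finset.filter _ (fun D => Dissociated D) (Classical.decPred _) B.powerset).sup Finset.card

/-- `x ∈ ZMod k` has an integer representative lying strictly between the reals `a` and `b`. -/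
def MemInterval {k : ℕ} (x : ZMod k) (a b : ℝ) : Prop :=
  ∃ m : ℤ, (m : ZMod k) = x ∧ a < (m : ℝ) ∧ (m : ℝ) < b

/-!
`B` lies in the set of `{-1, 0, 1}`-combinations of a maximal dissociated subset `D ⊆ B`, so
`|B| ≤ 3 ^ r` for `r = dim B`. Whenever `N ^ r < p`, Dirichlet's pigeonhole argument yields integers
`0 ≤ m < n < p` such that `m * d` and `n * d` are within `k / N` of each other modulo `k` for every
`d ∈ D`. As `0 < n - m < p`, the integer `n - m` is a unit modulo `k`; dilating by it makes the
elements of `D` smaller than `k / N`, hence those of `B` at most `r * k / N`. The choice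
`N = 100 * 3 ^ r * (r + 1)` makes this less than `k / (100 * |B|)`, and the hypothesis on the
dimension gives `N ^ r ≤ 600 ^ (r ^ 2) < p`.
-/

section Dissociation

variable {G : Type*} [AddCommGroup G]

lemma sum_zsmul_eq_sum_filter_sub_sum_filter {D : Finset G} {ε : G → ℤ}
    (hε : ∀ d ∈ D, ε d = -1 ∨ ε d = 0 ∨ ε d = 1) :
    ∑ d ∈ D, ε d • d = ∑ d ∈ D with ε d = 1, d - ∑ d ∈ D with ε d = -1, d := by
  rw [Finset.sum_filter, Finset.sum_filter, ← Finset.sum_sub_distrib]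
  refine Finset.sum_congr rfl fun d hd => ?_
  rcases hε d hd with h | h | h <;> simp [h]

lemma dissociated_of_addDissociated {D : Finset G} (hD : AddDissociated (D : Set G)) :
    Dissociated D := by
  intro ε hε hsum d hd
  rw [sum_zsmul_eq_sum_filter_sub_sum_filter hε, sub_eq_zero] at hsum
  have hfilter : {d ∈ D | ε d = 1} = {d ∈ D | ε d = -1} :=
    hD (Finset.coe_subset.2 (Finset.filter_subset _ _))
      (Finset.coe_subset.2 (Finset.filter_subset _ _)) hsum
  have hsign : ε d = 1 ↔ ε d = -1 := by
    simpa [hd] using congrArg (d ∈ ·) hfilter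
  have := hε d hd
  lia

variable [DecidableEq G]

lemma Dissociated.card_le_dimension {D B : Finset G} (hD : Dissociated D) (hDB : D ⊆ B) :
    D.card ≤ dimension B := by
  classical
  exact Finset.le_sup (f := Finset.card) (by simpa using ⟨hDB, hD⟩)

variable [Fintype G]

lemma exists_card_le_dimension_subset_addSpan (B : Finset G) :
    ∃ D : Finset G, D.card ≤ dimension B ∧ B ⊆ D.addSpan := by
  obtain ⟨D, -, hcard, hspan⟩ :=
    Finset.exists_subset_addSpan_card_le_of_forall_addDissociated fun _ hDB hD =>
      (dissociated_of_addDissociated hD).card_le_dimension (B := B) hDB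
  exact ⟨D, hcard, hspan⟩

lemma card_addSpan_le (D : Finset G) : D.addSpan.card ≤ 3 ^ D.card := by
  have hsub : D.addSpan ⊆ (Fintype.piFinset fun _ : D => ({-1, 0, 1} : Finset ℤ)).image
      fun ε => ∑ d : D, ε d • (d : G) := by
    intro x hx
    obtain ⟨ε, hε, rfl⟩ := Finset.mem_addSpan.1 hx
    exact Finset.mem_image.2
      ⟨fun d => ε d, by simpa using fun d _ => hε d, Finset.sum_coe_sort D fun d => ε d • d⟩
  calc D.addSpan.card
      ≤ (Fintype.piFinset fun _ : D => ({-1, 0, 1} : Finset ℤ)).card :=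
        (Finset.card_le_card hsub).trans Finset.card_image_le
    _ = 3 ^ D.card := by simp

lemma le_sum_of_mem_addSpan_of_subadditive {M : Type*} [AddCommMonoid M] [PartialOrder M]
    [IsOrderedAddMonoid M] [CanonicallyOrderedAdd M] {f : G → M} (f_zero : f 0 = 0)
    (f_add : ∀ x y, f (x + y) ≤ f x + f y) (f_neg : ∀ x, f (-x) = f x)
    {D : Finset G} {x : G} (hx : x ∈ D.addSpan) : f x ≤ ∑ d ∈ D, f d := by
  obtain ⟨ε, hε, rfl⟩ := Finset.mem_addSpan.1 hx
  calc f (∑ d ∈ D, ε d • d)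
      ≤ ∑ d ∈ D, f (ε d • d) := Finset.le_sum_of_subadditive f f_zero.le f_add _ _
    _ ≤ ∑ d ∈ D, f d := Finset.sum_le_sum fun d _ => by
        rcases hε d with h | h | h <;> simp [h, f_zero, f_neg]

end Dissociation

section Residues

variable {k : ℕ}

lemma natAbs_valMinAbs_intCast_le [NeZero k] (m : ℤ) :
    (m : ZMod k).valMinAbs.natAbs ≤ m.natAbs :=
  ZMod.natAbs_min_of_le_div_two k _ m (ZMod.coe_valMinAbs _) (ZMod.natAbs_valMinAbs_le _)

lemma natAbs_valMinAbs_mul_le_sum_of_mem_addSpan [NeZero k] (u : ZMod k) {D : Finset (ZMod k)}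
    {x : ZMod k} (hx : x ∈ D.addSpan) :
    (u * x).valMinAbs.natAbs ≤ ∑ d ∈ D, (u * d).valMinAbs.natAbs :=
  le_sum_of_mem_addSpan_of_subadditive (f := fun y => (u * y).valMinAbs.natAbs) (by simp)
    (fun y z => by
      simpa only [mul_add] using
        (ZMod.natAbs_valMinAbs_add_le (u * y) (u * z)).trans (Int.natAbs_add_le _ _))
    (fun y => by simp only [mul_neg, ZMod.natAbs_valMinAbs_neg]) hx

lemma memInterval_of_mul_natAbs_valMinAbs_lt {n : ℕ} (hn : 0 < n) {x : ZMod k}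
    (hx : n * x.valMinAbs.natAbs < k) : MemInterval x (-((k : ℝ) / n)) ((k : ℝ) / n) := by
  have habs : |(x.valMinAbs : ℝ)| < k / n := by
    rw [lt_div_iff₀' (by positivity), ← Int.cast_abs, ← Nat.cast_natAbs]
    exact_mod_cast hx
  exact ⟨x.valMinAbs, x.coe_valMinAbs, abs_lt.1 habs⟩

lemma mul_natAbs_sub_lt_of_mul_div_eq (hk : 0 < k) {N x y : ℕ} (h : N * x / k = N * y / k) :
    N * ((x : ℤ) - y).natAbs < k := by
  have hscale : N * ((x : ℤ) - y).natAbs = (((N * x : ℕ) : ℤ) - (N * y : ℕ)).natAbs := by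
    push_cast
    rw [← mul_sub, Int.natAbs_mul, Int.natAbs_natCast]
  have hx := Nat.div_add_mod (N * x) k
  have hy := Nat.div_add_mod (N * y) k
  have hx_lt := Nat.mod_lt (N * x) hk
  have hy_lt := Nat.mod_lt (N * y) hk
  rw [h] at hx
  lia

lemma exists_lt_lt_forall_mul_val_div_eq [NeZero k] {ι : Type*} [Fintype ι] (x : ι → ZMod k)
    {N P : ℕ} (hN : 0 < N) (hP : N ^ Fintype.card ι < P) :
    ∃ a b : ℕ, a < b ∧ b < P ∧
      ∀ i, N * (b * x i : ZMod k).val / k = N * (a * x i : ZMod k).val / k := by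
  classical
  have hbox (n : ℕ) (i : ι) : N * (n * x i : ZMod k).val / k < N :=
    Nat.div_lt_of_lt_mul (by
      rw [mul_comm k]
      exact Nat.mul_lt_mul_of_pos_left (ZMod.val_lt _) hN)
  obtain ⟨a, b, hne, heq⟩ := Fintype.exists_ne_map_eq_of_card_lt
    (fun (n : Fin P) i => (⟨_, hbox n i⟩ : Fin N)) (by simpa using hP)
  have hboxes (i : ι) : N * (a * x i : ZMod k).val / k = N * (b * x i : ZMod k).val / k :=
    congrArg Fin.val (congrFun heq i)
  rcases lt_or_gt_of_ne hne with hlt | hlt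
  · exact ⟨a, b, hlt, b.2, fun i => (hboxes i).symm⟩
  · exact ⟨b, a, hlt, a.2, hboxes⟩

lemma exists_unit_forall_mul_natAbs_valMinAbs_lt [NeZero k] {ι : Type*} [Fintype ι]
    (x : ι → ZMod k) {N : ℕ} (hN : 0 < N) (hcard : N ^ Fintype.card ι < k.minFac) :
    ∃ u : (ZMod k)ˣ, ∀ i, N * (u * x i : ZMod k).valMinAbs.natAbs < k := by
  obtain ⟨a, b, hab, hb, hboxes⟩ := exists_lt_lt_forall_mul_val_div_eq x hN hcard
  have hcop : (b - a).Coprime k := (Nat.coprime_of_lt_minFac (by lia) (by lia)).symm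
  refine ⟨ZMod.unitOfCoprime _ hcop, fun i => ?_⟩
  have hrepr : (ZMod.unitOfCoprime _ hcop * x i : ZMod k) =
      (((b * x i : ZMod k).val - (a * x i : ZMod k).val : ℤ) : ZMod k) := by
    simp [Nat.cast_sub hab.le, sub_mul]
  rw [hrepr]
  exact (Nat.mul_le_mul_left N (natAbs_valMinAbs_intCast_le _)).trans_lt
    (mul_natAbs_sub_lt_of_mul_div_eq (NeZero.pos k) (hboxes i))

lemma exists_unit_forall_mem_addSpan_mul_natAbs_valMinAbs_lt [NeZero k] {D : Finset (ZMod k)}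
    {M : ℕ} (hM : 0 < M) (hD : (M * (D.card + 1)) ^ D.card < k.minFac) :
    ∃ u : (ZMod k)ˣ, ∀ x ∈ D.addSpan, M * (u * x : ZMod k).valMinAbs.natAbs < k := by
  obtain ⟨u, hu⟩ := exists_unit_forall_mul_natAbs_valMinAbs_lt (fun d : D => (d : ZMod k))
    (N := M * (D.card + 1)) (by positivity) (by simpa using hD)
  refine ⟨u, fun x hx => lt_of_mul_lt_mul_left (a := D.card + 1) ?_ (Nat.zero_le _)⟩
  calc (D.card + 1) * (M * (u * x : ZMod k).valMinAbs.natAbs)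
      = M * (D.card + 1) * (u * x : ZMod k).valMinAbs.natAbs := by ring
    _ ≤ M * (D.card + 1) * ∑ d ∈ D, (u * d : ZMod k).valMinAbs.natAbs :=
        Nat.mul_le_mul_left _ (natAbs_valMinAbs_mul_le_sum_of_mem_addSpan _ hx)
    _ = ∑ d ∈ D, M * (D.card + 1) * (u * d : ZMod k).valMinAbs.natAbs := Finset.mul_sum _ _ _
    _ ≤ D.card * k := Finset.sum_le_card_nsmul _ _ _ fun d hd => (hu ⟨d, hd⟩).le
    _ < (D.card + 1) * k := Nat.mul_lt_mul_of_pos_right (Nat.lt_succ_self _) (NeZero.pos k)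

lemma exists_unit_forall_memInterval_of_pow_lt_minFac [NeZero k] {B : Finset (ZMod k)}
    (hB : B.Nonempty) {C r : ℕ} (hC : 0 < C) (hr : dimension B ≤ r)
    (hpow : (C * 3 ^ r * (r + 1)) ^ r < k.minFac) :
    ∃ u : (ZMod k)ˣ, ∀ b ∈ B,
      MemInterval (u * b : ZMod k) (-((k : ℝ) / (C * B.card))) ((k : ℝ) / (C * B.card)) := by
  obtain ⟨D, hDB, hspan⟩ := exists_card_le_dimension_subset_addSpan B
  have hDr : D.card ≤ r := hDB.trans hr
  have hcard : B.card ≤ 3 ^ r :=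
    (Finset.card_le_card hspan).trans <| (card_addSpan_le D).trans <|
      Nat.pow_le_pow_right (by norm_num) hDr
  have hpow_le : (C * B.card * (D.card + 1)) ^ D.card ≤ (C * 3 ^ r * (r + 1)) ^ r :=
    (Nat.pow_le_pow_left (by gcongr) _).trans (Nat.pow_le_pow_right (by positivity) hDr)
  have hCB : 0 < C * B.card := Nat.mul_pos hC hB.card_pos
  obtain ⟨u, hu⟩ :=
    exists_unit_forall_mem_addSpan_mul_natAbs_valMinAbs_lt hCB (hpow_le.trans_lt hpow)
  exact ⟨u, fun b hb => by
    simpa using memInterval_of_mul_natAbs_valMinAbs_lt hCB (hu b (hspan hb))⟩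

end Residues

section Estimates

lemma mul_three_pow_mul_succ_pow_le (C r : ℕ) :
    (C * 3 ^ r * (r + 1)) ^ r ≤ (6 * C) ^ r ^ 2 := by
  rcases eq_or_ne r 0 with rfl | hr
  · simp
  calc (C * 3 ^ r * (r + 1)) ^ r
      ≤ (C ^ r * 3 ^ r * 2 ^ r) ^ r := by
        gcongr
        · exact Nat.le_self_pow hr C
        · exact Nat.lt_two_pow_self
    _ = (6 * C) ^ r ^ 2 := by
        rw [sq, pow_mul, ← mul_pow, ← mul_pow]
        ring_nf

lemma pow_sq_lt_of_mul_sqrt_log_lt {a p : ℝ} {r : ℕ} (ha : 1 ≤ a) (hp : 0 < p)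
    (h : r * √(Real.log a) < √(Real.log p)) : a ^ r ^ 2 < p := by
  have hlog : Real.log (a ^ r ^ 2) < Real.log p := by
    calc Real.log (a ^ r ^ 2)
        = (r * √(Real.log a)) ^ 2 := by
          rw [Real.log_pow, mul_pow, Real.sq_sqrt (Real.log_nonneg ha)]
          push_cast
          rfl
      _ < Real.log p := (Real.lt_sqrt (by positivity)).1 h
  exact (Real.log_lt_log_iff (by positivity) hp).1 hlog

end Estimates

/-- Rectification lemma: there is an absolute constant `c₁ > 0` such that for every `k ≥ 2`
with least prime divisor `p`, every nonempty `B ⊆ ℤ_k` with `dim(B) < c₁ (log p)^(1/2)`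
admits a unit `λ ∈ ℤ_k^×` with `λ · B ⊆ (-k/(100|B|), k/(100|B|))`. -/
theorem rectification_lemma :
    ∃ c₁ : ℝ, 0 < c₁ ∧
      ∀ k : ℕ, 2 ≤ k →
        ∀ B : Finset (ZMod k), B.Nonempty →
          (dimension B : ℝ) < c₁ * (Real.log (k.minFac : ℝ)) ^ ((1 : ℝ) / 2) →
            ∃ lam : (ZMod k)ˣ, ∀ b ∈ B,
              MemInterval ((lam : ZMod k) * b)
                (-((k : ℝ) / (100 * B.card))) ((k : ℝ) / (100 * B.card)) := by
  have hlog : 0 < √(Real.log 600) := Real.sqrt_pos.2 (Real.log_pos (by norm_num))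
  refine ⟨(√(Real.log 600))⁻¹, inv_pos.2 hlog, fun k hk B hB hdim => ?_⟩
  have : NeZero k := ⟨by lia⟩
  rw [← Real.sqrt_eq_rpow, lt_inv_mul_iff₀' hlog] at hdim
  have hminFac : 600 ^ dimension B ^ 2 < k.minFac := by
    exact_mod_cast pow_sq_lt_of_mul_sqrt_log_lt (by norm_num)
      (Nat.cast_pos.2 k.minFac_pos) hdim
  exact_mod_cast exists_unit_forall_memInterval_of_pow_lt_minFac hB (C := 100) (by norm_num) le_rfl
    ((mul_three_pow_mul_succ_pow_le 100 _).trans_lt hminFac)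
end

section
/- Let k ≥ 2 be an integer with least prime divisor p, and let x_1, …, x_r ∈ ℤ_k. Then there exist distinct λ_1, λ_2 ∈ {0, 1, …, p−1} such that ‖λ_1 x_i − λ_2 x_i‖ ≤ k / p^{1/r} for every 1 ≤ i ≤ r. -/
/-- For `y ∈ ZMod k`, `zmodNorm y` is the distance from any integer representative of `y`
to the nearest multiple of `k`, i.e. `min {|m| : m ∈ ℤ, m ≡ y (mod k)}`. -/
def zmodNorm {k : ℕ} (y : ZMod k) : ℕ :=
  min y.val (k - y.val)

/-!
Put `n` points in the torus `ℤ_k ^ r` and attach to each a copy of the box `{0, …, t} ^ r`, where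
`t = ⌊k / n ^ (1 / r)⌋`. Since `n (t + 1) ^ r > k ^ r`, two of the boxes meet, so the two points
they are attached to differ in every coordinate by a difference of elements of `{0, …, t}`, hence
by an element of norm at most `t`. The theorem is the case of the points `λ x` with
`0 ≤ λ < n = p`.
-/

open Finset
open scoped Pointwise

theorem exists_ne_sub_mem_sub_of_card_lt {G α : Type*} [AddCommGroup G] [Fintype G]
    [DecidableEq G] [Fintype α] (y : α → G) (B : Finset G)
    (hcard : Fintype.card G < Fintype.card α * #B) :
    ∃ a b, a ≠ b ∧ y a - y b ∈ B - B := by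
  obtain ⟨⟨a, u⟩, ⟨b, v⟩, hne, heq⟩ :=
    Fintype.exists_ne_map_eq_of_card_lt (fun c : α × B => y c.1 + c.2) (by simpa using hcard)
  have hab : a ≠ b := by
    rintro rfl
    exact hne (congrArg (Prod.mk a) (Subtype.ext (add_left_cancel heq)))
  have hsub : y a - y b = v - u := by
    rw [sub_eq_sub_iff_add_eq_add, heq, add_comm]
  exact ⟨a, b, hab, hsub ▸ sub_mem_sub v.2 u.2⟩

theorem pow_lt_mul_floor_div_rpow_add_one_pow (k : ℕ) {n r : ℕ} (hn : n ≠ 0) (hr : r ≠ 0) :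
    k ^ r < n * (⌊(k : ℝ) / (n : ℝ) ^ (1 / (r : ℝ))⌋₊ + 1) ^ r := by
  set q : ℝ := (n : ℝ) ^ (1 / (r : ℝ))
  have hq : 0 < q := by positivity
  have hqr : q ^ r = n := by
    simpa only [q, one_div] using Real.rpow_inv_natCast_pow n.cast_nonneg hr
  have hlt : (k : ℝ) < q * (⌊k / q⌋₊ + 1) := (div_lt_iff₀' hq).1 (Nat.lt_floor_add_one _)
  have hpow : (k : ℝ) ^ r < n * (⌊k / q⌋₊ + 1) ^ r := by
    simpa only [mul_pow, hqr] using pow_lt_pow_left₀ hlt k.cast_nonneg hr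
  exact_mod_cast hpow

theorem card_image_natCast_range {R : Type*} [AddMonoidWithOne R] [IsRightCancelAdd R]
    [DecidableEq R] (k : ℕ) [CharP R k] {t : ℕ} (ht : t ≤ k) :
    #((range t).image ((↑) : ℕ → R)) = t := by
  have hinj : Set.InjOn ((↑) : ℕ → R) (range t) :=
    (CharP.natCast_injOn_Iio R k).mono fun m hm => (mem_range.1 hm).trans_le ht
  rw [card_image_of_injOn hinj, card_range]

section ZModNorm

variable {k : ℕ} [NeZero k]

theorem zmodNorm_intCast_le (m : ℤ) : zmodNorm (m : ZMod k) ≤ m.natAbs := by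
  rw [zmodNorm, ← ZMod.valMinAbs_natAbs_eq_min]
  exact ZMod.natAbs_min_of_le_div_two k _ m (ZMod.coe_valMinAbs _) (ZMod.natAbs_valMinAbs_le _)

theorem zmodNorm_natCast_sub_natCast_le {t u v : ℕ} (hu : u ≤ t) (hv : v ≤ t) :
    zmodNorm ((u : ZMod k) - (v : ZMod k)) ≤ t :=
  calc zmodNorm ((u : ZMod k) - (v : ZMod k))
    _ = zmodNorm (((u : ℤ) - (v : ℤ) : ℤ) : ZMod k) := by push_cast; rfl
    _ ≤ ((u : ℤ) - (v : ℤ)).natAbs := zmodNorm_intCast_le _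
    _ ≤ t := by lia

variable {α ι : Type*} [Fintype α] [Fintype ι] (y : α → ι → ZMod k)

theorem exists_ne_forall_zmodNorm_sub_le_of_pow_lt {t : ℕ} (ht : t < k)
    (hcard : k ^ Fintype.card ι < Fintype.card α * (t + 1) ^ Fintype.card ι) :
    ∃ a b, a ≠ b ∧ ∀ i, zmodNorm (y a i - y b i) ≤ t := by
  classical
  let I : Finset (ZMod k) := (range (t + 1)).image (↑)
  have hI : #I = t + 1 := card_image_natCast_range k ht
  obtain ⟨a, b, hab, hmem⟩ := exists_ne_sub_mem_sub_of_card_lt y (Fintype.piFinset fun _ : ι => I)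
    (by simpa [hI] using hcard)
  obtain ⟨u, hu, v, hv, huv⟩ := mem_sub.1 hmem
  refine ⟨a, b, hab, fun i => ?_⟩
  obtain ⟨m, hm, hmu⟩ := mem_image.1 (Fintype.mem_piFinset.1 hu i)
  obtain ⟨n, hn, hnv⟩ := mem_image.1 (Fintype.mem_piFinset.1 hv i)
  rw [← Pi.sub_apply, ← huv, Pi.sub_apply, ← hmu, ← hnv]
  exact zmodNorm_natCast_sub_natCast_le (mem_range_succ_iff.1 hm) (mem_range_succ_iff.1 hn)

theorem exists_ne_forall_zmodNorm_sub_le (hα : 1 < Fintype.card α) :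
    ∃ a b, a ≠ b ∧ ∀ i, (zmodNorm (y a i - y b i) : ℝ) ≤
      k / (Fintype.card α : ℝ) ^ (1 / (Fintype.card ι : ℝ)) := by
  rcases isEmpty_or_nonempty ι with hι | hι
  · obtain ⟨a, b, hab⟩ := Fintype.exists_pair_of_one_lt_card hα
    exact ⟨a, b, hab, isEmptyElim⟩
  set q : ℝ := (Fintype.card α : ℝ) ^ (1 / (Fintype.card ι : ℝ))
  have hk : 0 < (k : ℝ) := Nat.cast_pos.2 (NeZero.pos k)
  have hq_gt : 1 < q := Real.one_lt_rpow (Nat.one_lt_cast.2 hα) (by positivity)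
  have hfloor : ⌊k / q⌋₊ < k := (Nat.floor_lt (by positivity)).2 (div_lt_self hk hq_gt)
  obtain ⟨a, b, hab, hle⟩ := exists_ne_forall_zmodNorm_sub_le_of_pow_lt y hfloor
    (pow_lt_mul_floor_div_rpow_add_one_pow k (by lia) Fintype.card_ne_zero)
  exact ⟨a, b, hab, fun i => (Nat.le_floor_iff (by positivity)).1 (hle i)⟩

theorem pigeonhole_dilates_general (x : ι → ZMod k) {n : ℕ} (hn : 2 ≤ n) :
    ∃ lam₁ lam₂ : ℕ, lam₁ < n ∧ lam₂ < n ∧ lam₁ ≠ lam₂ ∧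
      ∀ i, (zmodNorm ((lam₁ : ZMod k) * x i - (lam₂ : ZMod k) * x i) : ℝ) ≤
        (k : ℝ) / (n : ℝ) ^ ((1 : ℝ) / (Fintype.card ι : ℝ)) := by
  obtain ⟨a, b, hab, hle⟩ :=
    exists_ne_forall_zmodNorm_sub_le (fun (a : Fin n) i => (a : ZMod k) * x i)
      (by rwa [Fintype.card_fin])
  rw [Fintype.card_fin] at hle
  exact ⟨a, b, a.2, b.2, Fin.val_ne_of_ne hab, hle⟩

end ZModNorm

/-- Pigeonhole step: for `k ≥ 2` with least prime divisor `p` and `x_1, …, x_r ∈ ℤ_k`,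
there exist distinct `λ₁, λ₂ ∈ {0, 1, …, p-1}` with
`‖λ₁ x_i - λ₂ x_i‖ ≤ k / p^(1/r)` for every `i`. -/
theorem pigeonhole_dilates (k : ℕ) (hk : 2 ≤ k) (r : ℕ) (x : Fin r → ZMod k) :
    ∃ lam₁ lam₂ : ℕ, lam₁ < k.minFac ∧ lam₂ < k.minFac ∧ lam₁ ≠ lam₂ ∧
      ∀ i : Fin r,
        (zmodNorm ((lam₁ : ZMod k) * x i - (lam₂ : ZMod k) * x i) : ℝ) ≤
          (k : ℝ) / (k.minFac : ℝ) ^ ((1 : ℝ) / (r : ℝ)) := by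
  have : NeZero k := ⟨by lia⟩
  simpa using pigeonhole_dilates_general x (Nat.minFac_prime (by lia : k ≠ 1)).two_le
end

section
/- Let s ≥ 1 be an integer, and for each ℓ ∈ {1, …, s} let Q_ℓ := {2ℓ−1, 2ℓ, 2s+2ℓ−1, 2s+2ℓ} ⊆ {1, …, 4s}. Then for every nonempty proper interval [i, j] ⊆ {1, …, 4s} (i.e. 1 ≤ i ≤ j ≤ 4s with [i,j] ≠ {1,…,4s}), there exists ℓ ∈ {1, …, s} such that [i, j] contains at least one element of Q_ℓ but does not contain all of Q_ℓ. -/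
/-!
Every block has two positions in the first half `{1, …, 2s}` and two in the second half, so an
interval containing a whole block contains the two middle positions `2s` and `2s + 1`. These
belong to the last and the first block respectively. Hence a nonempty interval that contains every
block it meets contains the last position `4s` and the first position `1`, and is everything.
-/

/-- The set `Q_ℓ` of the four positions of the `ℓ`-th block in the rearrangement of `s` blocks;
blocks and positions are numbered from `1`. -/
def blockPositions (s ℓ : ℕ) : Finset ℕ :=
  {2 * ℓ - 1, 2 * ℓ, 2 * s + 2 * ℓ - 1, 2 * s + 2 * ℓ}

/-- A set of positions is block-saturated if it contains every block `Q_1, …, Q_s` that it meets,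
so that within `{1, …, 4s}` it is a union of blocks. -/
def IsBlockSaturated (s : ℕ) (I : Set ℕ) : Prop :=
  ∀ ⦃ℓ⦄, 1 ≤ ℓ → ℓ ≤ s → ∀ ⦃x⦄, x ∈ blockPositions s ℓ → x ∈ I → ↑(blockPositions s ℓ) ⊆ I

section

variable {s ℓ x : ℕ} {I : Set ℕ}

theorem mem_blockPositions :
    x ∈ blockPositions s ℓ ↔
      x = 2 * ℓ - 1 ∨ x = 2 * ℓ ∨ x = 2 * s + 2 * ℓ - 1 ∨ x = 2 * s + 2 * ℓ := by
  simp only [blockPositions, Finset.mem_insert, Finset.mem_singleton]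

theorem exists_mem_blockPositions (hx : x ∈ Set.Icc 1 (4 * s)) :
    ∃ ℓ, 1 ≤ ℓ ∧ ℓ ≤ s ∧ x ∈ blockPositions s ℓ := by
  obtain ⟨one_le_x, x_le⟩ := hx
  simp only [mem_blockPositions]
  rcases le_or_gt x (2 * s) with first_half | second_half
  · exact ⟨(x + 1) / 2, by lia⟩
  · exact ⟨(x - 2 * s + 1) / 2, by lia⟩

theorem Icc_middle_subset_of_blockPositions_subset (hI : I.OrdConnected) (one_le : 1 ≤ ℓ)
    (le_s : ℓ ≤ s) (hℓ : ↑(blockPositions s ℓ) ⊆ I) : Set.Icc (2 * s) (2 * s + 1) ⊆ I := by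
  have left_mem : 2 * ℓ ∈ I := hℓ (mem_blockPositions.2 (by lia))
  have right_mem : 2 * s + 2 * ℓ - 1 ∈ I := hℓ (mem_blockPositions.2 (by lia))
  exact (Set.Icc_subset_Icc (by lia) (by lia)).trans (hI.out left_mem right_mem)

theorem IsBlockSaturated.Icc_subset (hsat : IsBlockSaturated s I) (hI : I.OrdConnected)
    (hne : (I ∩ Set.Icc 1 (4 * s)).Nonempty) : Set.Icc 1 (4 * s) ⊆ I := by
  obtain ⟨x, x_mem, x_range⟩ := hne
  obtain ⟨ℓ, one_le, le_s, x_block⟩ := exists_mem_blockPositions x_range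
  have one_le_s : 1 ≤ s := one_le.trans le_s
  have middle_subset : Set.Icc (2 * s) (2 * s + 1) ⊆ I :=
    Icc_middle_subset_of_blockPositions_subset hI one_le le_s (hsat one_le le_s x_block x_mem)
  have first_block_subset : ↑(blockPositions s 1) ⊆ I :=
    hsat le_rfl one_le_s (x := 2 * s + 1) (mem_blockPositions.2 (by lia))
      (middle_subset (Set.right_mem_Icc.2 (by lia)))
  have last_block_subset : ↑(blockPositions s s) ⊆ I :=
    hsat one_le_s le_rfl (x := 2 * s) (mem_blockPositions.2 (by lia))
      (middle_subset (Set.left_mem_Icc.2 (by lia)))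
  have one_mem : 1 ∈ I := first_block_subset (mem_blockPositions.2 (by lia))
  have end_mem : 4 * s ∈ I := last_block_subset (mem_blockPositions.2 (by lia))
  exact hI.out one_mem end_mem

end

/-- Combinatorial property of the deterministic rearrangement: for `s ≥ 1` and
`Q_ℓ := {2ℓ-1, 2ℓ, 2s+2ℓ-1, 2s+2ℓ}` (for `1 ≤ ℓ ≤ s`), every nonempty proper interval
`[i, j] ⊆ {1, …, 4s}` contains at least one element of some `Q_ℓ` without containing
all of `Q_ℓ`. -/
theorem rearrangement_interval_property (s : ℕ) (hs : 1 ≤ s)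
    (i j : ℕ) (hi : 1 ≤ i) (hij : i ≤ j) (hj : j ≤ 4 * s)
    (hproper : ¬(i = 1 ∧ j = 4 * s)) :
    ∃ ℓ : ℕ, 1 ≤ ℓ ∧ ℓ ≤ s ∧
      ((Finset.Icc i j) ∩
        ({2 * ℓ - 1, 2 * ℓ, 2 * s + 2 * ℓ - 1, 2 * s + 2 * ℓ} : Finset ℕ)).Nonempty ∧
      ¬ (({2 * ℓ - 1, 2 * ℓ, 2 * s + 2 * ℓ - 1, 2 * s + 2 * ℓ} : Finset ℕ) ⊆
        Finset.Icc i j) := by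
  by_contra! no_split_block
  have hsat : IsBlockSaturated s (Finset.Icc i j) := fun ℓ one_le le_s x x_block x_mem =>
    Finset.coe_subset.2 <|
      no_split_block ℓ one_le le_s ⟨x, Finset.mem_inter.2 ⟨x_mem, x_block⟩⟩
  rw [Finset.coe_Icc] at hsat
  have all_subset : Set.Icc 1 (4 * s) ⊆ Set.Icc i j :=
    hsat.Icc_subset Set.ordConnected_Icc ⟨i, Set.left_mem_Icc.2 hij, hi, hij.trans hj⟩
  obtain ⟨i_le, le_j⟩ := (Set.Icc_subset_Icc_iff (by lia)).1 all_subset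
  exact hproper ⟨i_le.antisymm hi, hj.antisymm le_j⟩
end
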